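/- Let n ≥ 3, γ > −min(2,n), α > 1 with α ≥ max(1, 1+γ/n), γ/(α−1) < s ≤ n, α ≤ q < ∞, r = ∞, and assume s/n + 1/q > 0, s/n + 1/q < 1 or (s/n + 1/q = 1 and r ≤ 1), and the scale-critical condition s/n + 1/q = 1/q_c < 1/Q_c. Let T > 0 and u₀ ∈ 𝒦̇^s_{q,∞}(ℝⁿ). If u₁, u₂ : [0,T] → 𝒦̇^s_{q,∞}(ℝⁿ) are mild solutions of the Hardy–Hénon equation on (0,T) with initial data u₀, with u₁(0) = u₂(0) = u₀ and with t ↦ u_i(t) continuous on [0,T] with respect to the Herz quasi-norm ‖·‖_{K̇^s_{q,∞}} for i = 1,2, then for every t ∈ [0,T], u₁(t) = u₂(t) almost everywhere on ℝⁿ. -/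

import Mathlib

open MeasureTheory Set ENNReal Filter

noncomputable section

abbrev Euc (n : ℕ) : Type := EuclideanSpace ℝ (Fin n)

def annulus (n : ℕ) (j : ℤ) : Set (Euc n) :=
  {x : Euc n | (2 : ℝ) ^ (j - 1) ≤ ‖x‖ ∧ ‖x‖ < (2 : ℝ) ^ j}

def herzNorm (n : ℕ) (s : ℝ) (q r : ℝ≥0∞) (f : Euc n → ℝ) : ℝ≥0∞ :=
  if r = ⊤ then
    ⨆ j : ℤ, ENNReal.ofReal ((2 : ℝ) ^ ((j : ℝ) * s)) *
      eLpNorm ((annulus n j).indicator f) q volume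
  else
    (∑' j : ℤ, (ENNReal.ofReal ((2 : ℝ) ^ ((j : ℝ) * s)) *
      eLpNorm ((annulus n j).indicator f) q volume) ^ r.toReal) ^ (1 / r.toReal)

def heatKernel (n : ℕ) (t : ℝ) (x y : Euc n) : ℝ :=
  (4 * Real.pi * t) ^ (-(n : ℝ) / 2) * Real.exp (-‖x - y‖ ^ 2 / (4 * t))

def heatSemigroup (n : ℕ) (t : ℝ) (f : Euc n → ℝ) (x : Euc n) : ℝ :=
  ∫ y, heatKernel n t x y * f y

def nonlin (n : ℕ) (γ α : ℝ) (v : Euc n → ℝ) (x : Euc n) : ℝ :=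
  ‖x‖ ^ γ * |v x| ^ (α - 1) * v x

/-- `u` is a mild solution of the Hardy–Hénon equation
`∂ₜu - Δu = |x|^γ |u|^{α-1} u` on `(0,T) × ℝⁿ` with initial data `u₀`:
`u` is measurable, and for a.e. `(t,x) ∈ (0,T) × ℝⁿ` the relevant integrals
converge absolutely and the Duhamel formula holds. -/
def IsMildSolution (n : ℕ) (γ α T : ℝ) (u₀ : Euc n → ℝ) (u : ℝ → Euc n → ℝ) : Prop :=
  Measurable (Function.uncurry u) ∧
  ∀ᵐ p : ℝ × Euc n ∂((volume.restrict (Set.Ioo (0 : ℝ) T)).prod volume),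
    (Integrable (fun y => heatKernel n p.1 p.2 y * u₀ y) volume) ∧
    (Integrable (fun z : ℝ × Euc n =>
        heatKernel n (p.1 - z.1) p.2 z.2 * nonlin n γ α (u z.1) z.2)
      ((volume.restrict (Set.Ioo (0 : ℝ) p.1)).prod volume)) ∧
    u p.1 p.2 = heatSemigroup n p.1 u₀ p.2 +
      ∫ z : ℝ × Euc n, heatKernel n (p.1 - z.1) p.2 z.2 * nonlin n γ α (u z.1) z.2
        ∂((volume.restrict (Set.Ioo (0 : ℝ) p.1)).prod volume)

/-- `f` belongs to `𝒦̇^s_{q,r}(ℝⁿ)`, the closure of `C_c^∞(ℝⁿ)` in the Herz space. -/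
def MemHerzClosure (n : ℕ) (s : ℝ) (q r : ℝ≥0∞) (f : Euc n → ℝ) : Prop :=
  herzNorm n s q r f < ⊤ ∧
  ∀ ε : ℝ, 0 < ε → ∃ g : Euc n → ℝ, ContDiff ℝ (⊤ : ℕ∞) g ∧ HasCompactSupport g ∧
    herzNorm n s q r (fun x => f x - g x) < ENNReal.ofReal ε

/-- `t ↦ u t` is continuous on `I` with respect to the Herz quasi-norm. -/
def HerzContinuousOn (n : ℕ) (s : ℝ) (q r : ℝ≥0∞) (u : ℝ → Euc n → ℝ) (I : Set ℝ) : Prop :=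
  ∀ t₀ ∈ I, ∀ ε : ℝ, 0 < ε → ∃ δ : ℝ, 0 < δ ∧ ∀ t ∈ I, |t - t₀| < δ →
    herzNorm n s q r (fun x => u t x - u t₀ x) < ENNReal.ofReal ε

def hk (n : ℕ) (τ : ℝ) (x y : Euc n) : ℝ≥0∞ := ENNReal.ofReal (heatKernel n τ x y)

lemma heatKernel_nonneg (n : ℕ) {τ : ℝ} (hτ : 0 < τ) (x y : Euc n) : 0 ≤ heatKernel n τ x y := by
  unfold heatKernel; positivity

lemma hk_symm (n : ℕ) (τ : ℝ) (x y : Euc n) : hk n τ x y = hk n τ y x := by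
  unfold hk heatKernel; rw [norm_sub_rev]

lemma hk_meas (n : ℕ) : Measurable (fun p : ℝ × Euc n × Euc n => hk n p.1 p.2.1 p.2.2) := by
  unfold hk heatKernel
  apply ENNReal.measurable_ofReal.comp
  apply Measurable.mul
  · exact (measurable_const.mul measurable_fst).pow_const _
  · apply Real.measurable_exp.comp
    apply Measurable.div
    · apply Measurable.neg
      apply Measurable.pow_const
      apply Measurable.norm
      exact (measurable_fst.comp measurable_snd).sub (measurable_snd.comp measurable_snd)
    · exact measurable_const.mul measurable_fst

lemma hk_meas2 (n : ℕ) (τ : ℝ) : Measurable (fun p : Euc n × Euc n => hk n τ p.1 p.2) := by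
  exact Measurable.of_uncurry_left (f := fun a (p : Euc n × Euc n) => hk n a p.1 p.2) (x := τ) (hk_meas n)

lemma hk_meas_right (n : ℕ) (τ : ℝ) (x : Euc n) : Measurable (fun y : Euc n => hk n τ x y) := by
  exact Measurable.of_uncurry_left (f := fun a b => hk n τ a b) (x := x) (hk_meas2 n τ)

lemma hk_meas_left (n : ℕ) (τ : ℝ) (y : Euc n) : Measurable (fun x : Euc n => hk n τ x y) := by
  exact Measurable.of_uncurry_right (f := fun a b => hk n τ a b) (y := y) (hk_meas2 n τ)

lemma hk_le (n : ℕ) {τ : ℝ} (hτ : 0 < τ) (x y : Euc n) :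
    hk n τ x y ≤ (ENNReal.ofReal τ) ^ (-((n : ℝ) / 2)) := by
  rw [ENNReal.ofReal_rpow_of_pos hτ]
  apply ENNReal.ofReal_le_ofReal
  unfold heatKernel
  have h1 : Real.exp (-‖x - y‖ ^ 2 / (4 * τ)) ≤ 1 := by
    apply Real.exp_le_one_iff.mpr
    rw [neg_div]
    have : 0 ≤ ‖x - y‖ ^ 2 / (4 * τ) := by positivity
    linarith
  have h2 : (4 * Real.pi * τ) ^ (-(n : ℝ) / 2) ≤ τ ^ (-((n : ℝ) / 2)) := by
    rw [neg_div]
    apply Real.rpow_le_rpow_of_nonpos hτ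
    · nlinarith [Real.pi_gt_three]
    · have : (0:ℝ) ≤ n := by positivity
      linarith
  calc _ ≤ (4 * Real.pi * τ) ^ (-(n : ℝ) / 2) * 1 := by gcongr
    _ ≤ _ := by linarith

lemma hk_le_far (n : ℕ) (hn : 3 ≤ n) {τ d : ℝ} (hτ : 0 < τ) (hd : 0 < d) (x y : Euc n)
    (hxy : d ≤ ‖x - y‖) :
    hk n τ x y ≤ ENNReal.ofReal ((2 * n : ℝ) ^ ((n : ℝ) / 2)) * (ENNReal.ofReal d) ^ (-(n : ℝ)) := by
  have hn' : (3:ℝ) ≤ n := by exact_mod_cast hn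
  rw [ENNReal.ofReal_rpow_of_pos hd, ← ENNReal.ofReal_mul (by positivity)]
  apply ENNReal.ofReal_le_ofReal
  unfold heatKernel
  set p : ℝ := (n:ℝ)/2 with hp
  have hp0 : 0 < p := by positivity
  set v : ℝ := d^2/(4*τ) with hv
  have hv0 : 0 < v := by positivity
  have h1 : Real.exp (-‖x - y‖ ^ 2 / (4 * τ)) ≤ Real.exp (-v) := by
    apply Real.exp_le_exp.mpr
    rw [neg_div, hv]
    apply neg_le_neg
    gcongr
  have h2 : (4 * Real.pi * τ) ^ (-(n : ℝ) / 2) ≤ τ ^ (-p) := by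
    rw [neg_div]
    apply Real.rpow_le_rpow_of_nonpos hτ
    · nlinarith [Real.pi_gt_three]
    · linarith
  have h3 : v ^ p ≤ p ^ p * Real.exp v := by
    have : v / p ≤ Real.exp (v / p) := by linarith [Real.add_one_le_exp (v/p)]
    have h := Real.rpow_le_rpow (by positivity) this hp0.le
    rw [← Real.exp_mul, div_mul_cancel₀ _ hp0.ne', Real.div_rpow hv0.le hp0.le,
      div_le_iff₀ (by positivity)] at h
    linarith
  have h4 : τ ^ (-p) = 4 ^ p * v ^ p * d ^ (-(n:ℝ)) := by
    have : τ = (4 * v)⁻¹ * d^2 := by rw [hv]; field_simp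
    rw [this, Real.mul_rpow (by positivity) (by positivity), Real.inv_rpow (by positivity),
      Real.rpow_neg (by positivity), inv_inv, Real.mul_rpow (by positivity) (by positivity),
      ← Real.rpow_natCast d 2, ← Real.rpow_mul hd.le]
    congr 2
    push_cast; rw [hp]; ring
  calc _ ≤ τ ^ (-p) * Real.exp (-v) := by gcongr
    _ ≤ 4 ^ p * (p ^ p * Real.exp v) * d ^ (-(n:ℝ)) * Real.exp (-v) := by rw [h4]; gcongr
    _ = 4 ^ p * p ^ p * d ^ (-(n:ℝ)) * (Real.exp v * Real.exp (-v)) := by ring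
    _ = (2 * n) ^ p * d ^ (-(n:ℝ)) := by
      rw [← Real.exp_add, add_neg_cancel, Real.exp_zero, mul_one, ← Real.mul_rpow (by norm_num) hp0.le]
      congr 2; rw [hp]; ring

lemma lintegral_hk (n : ℕ) {τ : ℝ} (hτ : 0 < τ) (x : Euc n) : ∫⁻ y, hk n τ x y = 1 := by
  have hb : 0 < (4*τ)⁻¹ := by positivity
  have h := GaussianFourier.integral_rexp_neg_mul_sq_norm (V := Euc n) hb
  have hInt : Integrable (fun v : Euc n => Real.exp (-(4*τ)⁻¹ * ‖v‖^2)) := by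
    by_contra hc
    rw [integral_undef hc] at h
    have : 0 < (Real.pi / (4*τ)⁻¹) ^ ((Module.finrank ℝ (Euc n) : ℝ) / 2) := by positivity
    linarith
  have h2 : ∫⁻ v : Euc n, ENNReal.ofReal (Real.exp (-(4*τ)⁻¹ * ‖v‖^2))
      = ENNReal.ofReal ((Real.pi / (4*τ)⁻¹) ^ ((n : ℝ) / 2)) := by
    rw [← ofReal_integral_eq_lintegral_ofReal hInt (Eventually.of_forall fun _ => (Real.exp_pos _).le), h]
    simp
  have h3 : ∀ y, hk n τ x y = ENNReal.ofReal ((4 * Real.pi * τ) ^ (-(n : ℝ) / 2)) *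
      (fun v : Euc n => ENNReal.ofReal (Real.exp (-(4*τ)⁻¹ * ‖v‖^2))) (x - y) := by
    intro y
    unfold hk heatKernel
    rw [ENNReal.ofReal_mul (by positivity)]
    congr 3
    rw [neg_div, div_eq_mul_inv]; ring
  simp_rw [h3]
  rw [lintegral_const_mul' _ _ ENNReal.ofReal_ne_top,
    lintegral_sub_left_eq_self (fun v : Euc n => ENNReal.ofReal (Real.exp (-(4*τ)⁻¹ * ‖v‖^2))) x, h2,
    ← ENNReal.ofReal_mul (by positivity)]
  have : (Real.pi / (4*τ)⁻¹) = 4 * Real.pi * τ := by rw [div_inv_eq_mul]; ring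
  rw [this, ← Real.rpow_add (by positivity)]
  have : -(n:ℝ)/2 + n/2 = 0 := by ring
  rw [this]; simp

lemma lintegral_hk' (n : ℕ) {τ : ℝ} (hτ : 0 < τ) (y : Euc n) : ∫⁻ x, hk n τ x y = 1 := by
  simp_rw [fun x => hk_symm n τ x y]; exact lintegral_hk n hτ y

/-- Weighted Hölder. -/
lemma lintegral_holder_weight {Ω : Type*} [MeasurableSpace Ω] (μ : Measure Ω) {g f : Ω → ℝ≥0∞}
    (hg : Measurable g) (hf : Measurable f) (hgtop : ∀ᵐ x ∂μ, g x ≠ ⊤) {q : ℝ} (hq : 1 ≤ q) :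
    (∫⁻ x, g x * f x ∂μ) ^ q ≤ (∫⁻ x, g x * f x ^ q ∂μ) * (∫⁻ x, g x ∂μ) ^ (q - 1) := by
  have hq0 : 0 < q := by linarith
  have h := ENNReal.lintegral_mul_norm_pow_le (μ := μ) (f := fun x => g x * f x ^ q) (g := g)
    (hg.mul (hf.pow_const q)).aemeasurable hg.aemeasurable (p := 1/q) (q := 1 - 1/q)
    (by positivity) (by rw [sub_nonneg, div_le_one hq0]; exact hq) (by ring)
  have e : ∫⁻ x, g x * f x ∂μ = ∫⁻ x, (g x * f x ^ q) ^ (1/q) * g x ^ (1 - 1/q) ∂μ := by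
    apply lintegral_congr_ae
    filter_upwards [hgtop] with x hx
    rw [ENNReal.mul_rpow_of_nonneg _ _ (by positivity), ← ENNReal.rpow_mul, mul_one_div_cancel hq0.ne',
      ENNReal.rpow_one]
    by_cases h0 : g x = 0
    · simp [h0, hq0]
    · rw [mul_right_comm, ← ENNReal.rpow_add _ _ h0 hx]
      simp
  rw [e]
  calc _ ≤ _ := ENNReal.rpow_le_rpow h hq0.le
    _ = _ := by
      rw [ENNReal.mul_rpow_of_nonneg _ _ hq0.le, ← ENNReal.rpow_mul, ← ENNReal.rpow_mul]
      congr 2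
      · rw [one_div_mul_cancel hq0.ne', ENNReal.rpow_one]
      · field_simp

lemma rpow_sub_one_mul (x : ℝ≥0∞) {p : ℝ} (hp : 1 ≤ p) : x ^ (p - 1) * x = x ^ p := by
  have h := ENNReal.rpow_add_of_nonneg (x := x) (p - 1) 1 (by linarith) (by norm_num)
  rw [ENNReal.rpow_one, sub_add_cancel] at h
  exact h.symm

/-- Lebesgue smoothing of the heat kernel. -/
lemma heat_smoothing (n : ℕ) {τ : ℝ} (hτ : 0 < τ) {F : Euc n → ℝ≥0∞} (hF : Measurable F)
    {q' q : ℝ} (hq' : 1 ≤ q') (hqq : q' ≤ q) :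
    ∫⁻ x, (∫⁻ y, hk n τ x y * F y) ^ q ≤
      (ENNReal.ofReal τ) ^ (-((n : ℝ) / 2) * (q / q' - 1)) * (∫⁻ y, F y ^ q') ^ (q / q') := by
  have hq0 : 0 < q' := by linarith
  obtain ⟨p, hp⟩ : ∃ p, p = q / q' := ⟨_, rfl⟩
  rw [← hp]
  have hp1 : 1 ≤ p := by rw [hp, one_le_div hq0]; exact hqq
  obtain ⟨B, hB⟩ : ∃ B, B = ∫⁻ y, F y ^ q' := ⟨_, rfl⟩
  rw [← hB]
  have hm : Measurable (fun z : Euc n × Euc n => hk n τ z.1 z.2) :=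
    hk_meas2 n τ
  have hmx : ∀ x, Measurable (fun y => hk n τ x y) := fun x => hk_meas_right n τ x
  obtain ⟨J, hJ⟩ : ∃ J : Euc n → ℝ≥0∞, J = fun x => ∫⁻ y, hk n τ x y * F y ^ q' := ⟨_, rfl⟩
  have hJm : Measurable J := by
    rw [hJ]
    apply Measurable.lintegral_prod_right' (f := fun z : Euc n × Euc n => hk n τ z.1 z.2 * F z.2 ^ q')
    exact hm.mul ((hF.comp measurable_snd).pow_const _)
  have h1 : ∀ x, (∫⁻ y, hk n τ x y * F y) ^ q ≤ J x ^ p := by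
    intro x
    have := lintegral_holder_weight volume (hmx x) hF
      (Eventually.of_forall fun y => ENNReal.ofReal_ne_top) hq'
    rw [lintegral_hk n hτ x, ENNReal.one_rpow, mul_one] at this
    replace this : (∫⁻ y, hk n τ x y * F y) ^ q' ≤ J x := by rw [hJ]; exact this
    have h2 := ENNReal.rpow_le_rpow this (z := p) (by linarith)
    have h5 : q' * p = q := by rw [hp, mul_div_cancel₀ _ hq0.ne']
    rw [← ENNReal.rpow_mul, h5] at h2
    exact h2
  have h2 : ∀ x, J x ≤ (ENNReal.ofReal τ) ^ (-((n : ℝ) / 2)) * B := by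
    intro x
    rw [hB, ← lintegral_const_mul _ (hF.pow_const _), hJ]
    apply lintegral_mono
    intro y
    dsimp
    gcongr
    exact hk_le n hτ x y
  have h3 : ∫⁻ x, J x = B := by
    rw [hJ, lintegral_lintegral_swap]
    · have : ∀ y, ∫⁻ x, hk n τ x y * F y ^ q' = F y ^ q' := by
        intro y
        rw [lintegral_mul_const _ (hk_meas_left n τ y), lintegral_hk' n hτ, one_mul]
      rw [hB]; exact lintegral_congr this
    · exact (hm.mul ((hF.comp measurable_snd).pow_const _)).aemeasurable
  calc _ ≤ ∫⁻ x, J x ^ p := lintegral_mono h1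
    _ ≤ ∫⁻ x, ((ENNReal.ofReal τ) ^ (-((n : ℝ) / 2)) * B) ^ (p - 1) * J x := by
      apply lintegral_mono; intro x
      have : J x ^ p = J x ^ (p - 1) * J x := (rpow_sub_one_mul _ hp1).symm
      dsimp only
      rw [this]
      gcongr ?_ * _
      exact ENNReal.rpow_le_rpow (h2 x) (by linarith)
    _ = ((ENNReal.ofReal τ) ^ (-((n : ℝ) / 2)) * B) ^ (p - 1) * B := by
      rw [lintegral_const_mul _ hJm, h3]
    _ = _ := by
      rw [ENNReal.mul_rpow_of_nonneg _ _ (by linarith), ← ENNReal.rpow_mul, mul_assoc]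
      congr 1
      exact rpow_sub_one_mul _ hp1

/-- Minkowski in time, with an explicit majorant. -/
lemma minkowski_time {n : ℕ} {μ : Measure ℝ} [SFinite μ] {H : ℝ × Euc n → ℝ≥0∞} (hH : Measurable H)
    {φ : ℝ → ℝ≥0∞} (hφ : Measurable φ) (h0 : ∀ᵐ τ ∂μ, φ τ ≠ 0) (ht : ∀ᵐ τ ∂μ, φ τ ≠ ⊤)
    {q : ℝ} (hq : 1 ≤ q) {K : ℝ≥0∞}
    (hb : ∀ᵐ τ ∂μ, ∫⁻ x, H (τ, x) ^ q ≤ (K * φ τ) ^ q) :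
    (∫⁻ x, (∫⁻ τ, H (τ, x) ∂μ) ^ q) ^ (1/q) ≤ K * ∫⁻ τ, φ τ ∂μ := by
  have hq0 : 0 < q := by linarith
  have h1 : ∀ x, (∫⁻ τ, H (τ, x) ∂μ) ^ q ≤
      (∫⁻ τ, φ τ * ((φ τ)⁻¹ * H (τ, x)) ^ q ∂μ) * (∫⁻ τ, φ τ ∂μ) ^ (q - 1) := by
    intro x
    have hHx : Measurable fun τ => H (τ, x) := hH.comp (measurable_id.prodMk measurable_const)
    have := lintegral_holder_weight μ hφ (f := fun τ => (φ τ)⁻¹ * H (τ, x)) (hφ.inv.mul hHx) ht hq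
    refine le_trans (le_of_eq ?_) this
    congr 1
    apply lintegral_congr_ae
    filter_upwards [h0, ht] with τ a b
    rw [← mul_assoc, ENNReal.mul_inv_cancel a b, one_mul]
  have hm : Measurable (fun z : ℝ × Euc n => φ z.1 * ((φ z.1)⁻¹ * H z) ^ q) := by
    have : Measurable (fun z : ℝ × Euc n => φ z.1) := hφ.comp measurable_fst
    exact this.mul ((this.inv.mul hH).pow_const q)
  have h2 : ∫⁻ x, (∫⁻ τ, H (τ, x) ∂μ) ^ q ≤ (K * ∫⁻ τ, φ τ ∂μ) ^ q := by
    calc _ ≤ _ := lintegral_mono h1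
      _ = (∫⁻ x, ∫⁻ τ, φ τ * ((φ τ)⁻¹ * H (τ, x)) ^ q ∂μ) * (∫⁻ τ, φ τ ∂μ) ^ (q - 1) := by
        rw [lintegral_mul_const]
        exact Measurable.lintegral_prod_left' (f := fun z : ℝ × Euc n => φ z.1 * ((φ z.1)⁻¹ * H z) ^ q) hm
      _ = (∫⁻ τ, (∫⁻ x, φ τ * ((φ τ)⁻¹ * H (τ, x)) ^ q) ∂μ) * (∫⁻ τ, φ τ ∂μ) ^ (q - 1) := by
        rw [lintegral_lintegral_swap]
        exact (hm.comp measurable_swap).aemeasurable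
      _ ≤ (∫⁻ τ, K ^ q * φ τ ∂μ) * (∫⁻ τ, φ τ ∂μ) ^ (q - 1) := by
        gcongr ?_ * _
        apply lintegral_mono_ae
        filter_upwards [h0, ht, hb] with τ a b c
        have hHx : Measurable fun x => H (τ, x) := hH.comp (measurable_const.prodMk measurable_id)
        simp_rw [ENNReal.mul_rpow_of_nonneg _ _ hq0.le, ← mul_assoc]
        rw [lintegral_const_mul _ (hHx.pow_const q)]
        calc _ ≤ φ τ * (φ τ)⁻¹ ^ q * (K * φ τ) ^ q := by gcongr
          _ = K ^ q * φ τ * ((φ τ)⁻¹ * φ τ) ^ q := by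
            rw [ENNReal.mul_rpow_of_nonneg _ _ hq0.le, ENNReal.mul_rpow_of_nonneg _ _ hq0.le]; ring
          _ = _ := by rw [ENNReal.inv_mul_cancel a b]; simp
      _ = _ := by
        rw [lintegral_const_mul _ hφ, ENNReal.mul_rpow_of_nonneg _ _ hq0.le, mul_assoc]
        congr 1
        rw [mul_comm]; exact rpow_sub_one_mul _ hq
  calc _ ≤ _ := ENNReal.rpow_le_rpow h2 (by positivity : 0 ≤ 1/q)
    _ = _ := by rw [← ENNReal.rpow_mul, mul_one_div_cancel hq0.ne', ENNReal.rpow_one]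

lemma two_rpow_add (a b : ℝ) : (2:ℝ≥0∞) ^ a * 2 ^ b = 2 ^ (a + b) :=
  (ENNReal.rpow_add a b (by norm_num) (by norm_num)).symm

lemma two_rpow_ne_top (a : ℝ) : (2:ℝ≥0∞) ^ a ≠ ⊤ := by
  simp [ENNReal.rpow_eq_top_iff]

lemma two_rpow_mono {a b : ℝ} (h : a ≤ b) : (2:ℝ≥0∞) ^ a ≤ 2 ^ b :=
  ENNReal.rpow_le_rpow_of_exponent_le (by norm_num) h

lemma ofReal_two_rpow (a : ℝ) : ENNReal.ofReal ((2:ℝ) ^ a) = (2:ℝ≥0∞) ^ a := by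
  rw [← ENNReal.ofReal_rpow_of_pos (by norm_num)]; simp

lemma annulus_meas (n : ℕ) (k : ℤ) : MeasurableSet (annulus n k) := by
  have h1 : MeasurableSet {x : Euc n | (2 : ℝ) ^ (k - 1) ≤ ‖x‖} :=
    measurableSet_le measurable_const measurable_norm
  have h2 : MeasurableSet {x : Euc n | ‖x‖ < (2 : ℝ) ^ k} :=
    measurableSet_lt measurable_norm measurable_const
  exact h1.inter h2

lemma annulus_disjoint (n : ℕ) : Pairwise (Function.onFun Disjoint (annulus n)) := by
  have key : ∀ i j : ℤ, i < j → Disjoint (annulus n i) (annulus n j) := by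
    intro i j hij
    rw [Set.disjoint_left]
    rintro x ⟨_, h1⟩ ⟨h2, _⟩
    have : (2:ℝ) ^ i ≤ 2 ^ (j-1) := zpow_le_zpow_right₀ (by norm_num) (by omega)
    linarith
  intro i j hij
  rcases lt_or_gt_of_ne hij with h | h
  · exact key i j h
  · exact (key j i h).symm

lemma annulus_iUnion (n : ℕ) : (⋃ k, annulus n k) = {x | x ≠ 0} := by
  ext x
  simp only [mem_iUnion, mem_setOf_eq]
  constructor
  · rintro ⟨k, hk, _⟩ rfl
    rw [norm_zero] at hk
    have : (0:ℝ) < 2 ^ (k-1) := by positivity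
    linarith
  · intro hx
    obtain ⟨k, h1, h2⟩ := exists_mem_Ico_zpow (norm_pos_iff.mpr hx) (y := (2:ℝ)) (by norm_num)
    exact ⟨k+1, by simpa using h1, h2⟩

lemma annulus_iUnion_ae (n : ℕ) (hn : 3 ≤ n) : (⋃ k, annulus n k) =ᵐ[volume] (univ : Set (Euc n)) := by
  rw [annulus_iUnion]
  haveI : Nonempty (Fin n) := ⟨⟨0, by omega⟩⟩
  haveI : Nontrivial (Euc n) := inferInstance
  rw [ae_eq_univ]
  have : {x : Euc n | x ≠ 0}ᶜ = {0} := by ext; simp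
  rw [this]
  exact measure_singleton _

lemma lintegral_eq_tsum (n : ℕ) (hn : 3 ≤ n) (f : Euc n → ℝ≥0∞) :
    ∫⁻ x, f x = ∑' k : ℤ, ∫⁻ x in annulus n k, f x := by
  rw [← lintegral_iUnion (annulus_meas n) (annulus_disjoint n), setLIntegral_congr (annulus_iUnion_ae n hn)]
  simp

lemma vol_annulus (n : ℕ) (k : ℤ) :
    volume (annulus n k) ≤ volume (Metric.ball (0 : Euc n) 1) * 2 ^ ((k:ℝ) * n) := by
  have h : annulus n k ⊆ Metric.ball 0 ((2:ℝ) ^ k) := by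
    rintro x ⟨_, hx⟩
    simpa using hx
  refine (measure_mono h).trans ?_
  rw [Measure.addHaar_ball_of_pos _ _ (by positivity), mul_comm]
  gcongr
  apply le_of_eq
  rw [← ofReal_two_rpow]
  congr 1
  simp only [finrank_euclideanSpace, Fintype.card_fin]
  rw [Real.rpow_mul (by norm_num), Real.rpow_natCast, Real.rpow_intCast]

/-- `g` has Herz norm (with `r = ∞`) at most `N`. -/
def HB (n : ℕ) (s q : ℝ) (N : ℝ≥0∞) (g : Euc n → ℝ≥0∞) : Prop :=
  ∀ k : ℤ, (∫⁻ x in annulus n k, g x ^ q) ^ (1/q) ≤ N * 2 ^ (-((k:ℝ) * s))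

lemma HB.pow_le {n : ℕ} {s q : ℝ} {N : ℝ≥0∞} {g : Euc n → ℝ≥0∞} (h : HB n s q N g) (hq : 1 ≤ q)
    (k : ℤ) : ∫⁻ x in annulus n k, g x ^ q ≤ (N * 2 ^ (-((k:ℝ) * s))) ^ q := by
  have := ENNReal.rpow_le_rpow (h k) (by linarith : 0 ≤ q)
  rwa [← ENNReal.rpow_mul, one_div_mul_cancel (by linarith), ENNReal.rpow_one] at this

lemma HB.l1 {n : ℕ} {s q : ℝ} {N : ℝ≥0∞} {g : Euc n → ℝ≥0∞} (h : HB n s q N g) (hg : Measurable g)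
    (hq : 1 ≤ q) (k : ℤ) : ∫⁻ x in annulus n k, g x ≤
      N * (volume (Metric.ball (0 : Euc n) 1)) ^ (1 - 1/q) * 2 ^ ((k:ℝ) * (n - n/q - s)) := by
  have hq0 : 0 < q := by linarith
  have h1 := lintegral_holder_weight (volume.restrict (annulus n k)) (g := fun _ => 1) measurable_const hg
    (Eventually.of_forall fun _ => ENNReal.one_ne_top) hq
  simp only [one_mul, lintegral_const, Measure.restrict_apply, MeasurableSet.univ, univ_inter] at h1
  have h2 := ENNReal.rpow_le_rpow h1 (by positivity : 0 ≤ 1/q)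
  have e0 : 0 ≤ 1 - 1/q := by rw [sub_nonneg, div_le_one hq0]; exact hq
  rw [← ENNReal.rpow_mul, mul_one_div_cancel hq0.ne', ENNReal.rpow_one,
    ENNReal.mul_rpow_of_nonneg _ _ (by positivity), ← ENNReal.rpow_mul,
    show (q-1) * (1/q) = 1 - 1/q by field_simp] at h2
  calc _ ≤ _ := h2
    _ ≤ (N * 2 ^ (-((k:ℝ) * s))) * (volume (Metric.ball (0 : Euc n) 1) * 2 ^ ((k:ℝ) * n)) ^ (1 - 1/q) :=
      mul_le_mul' (h k) (ENNReal.rpow_le_rpow (vol_annulus n k) e0)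
    _ = N * (volume (Metric.ball (0 : Euc n) 1)) ^ (1 - 1/q) *
        (2 ^ (-((k:ℝ) * s)) * 2 ^ ((k:ℝ) * n * (1 - 1/q))) := by
      rw [ENNReal.mul_rpow_of_nonneg _ _ e0, ← ENNReal.rpow_mul]; ring
    _ = _ := by
      rw [two_rpow_add]; congr 2; ring

lemma ofReal_rpow_meas (c : ℝ) : Measurable (fun τ : ℝ => (ENNReal.ofReal τ) ^ c) :=
  ENNReal.measurable_ofReal.pow_const c

lemma time_small {c B : ℝ} (hc : c < 1) (hB : 0 < B) :
    ∫⁻ τ in Ioc 0 B, (ENNReal.ofReal τ) ^ (-c) =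
      ENNReal.ofReal (1/(1-c)) * (ENNReal.ofReal B) ^ (1-c) := by
  have h1 : ∫⁻ τ in Ioc 0 B, (ENNReal.ofReal τ) ^ (-c) = ∫⁻ τ in Ioc 0 B, ENNReal.ofReal (τ ^ (-c)) :=
    setLIntegral_congr_fun measurableSet_Ioc fun τ hτ => ENNReal.ofReal_rpow_of_pos hτ.1
  have hInt : IntegrableOn (fun τ : ℝ => τ ^ (-c)) (Ioc 0 B) := by
    rw [← intervalIntegrable_iff_integrableOn_Ioc_of_le hB.le]
    exact intervalIntegral.intervalIntegrable_rpow' (by linarith)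
  rw [h1, ← ofReal_integral_eq_lintegral_ofReal hInt]
  · rw [← intervalIntegral.integral_of_le hB.le, integral_rpow (Or.inl (by linarith)),
      ENNReal.ofReal_rpow_of_pos hB, ← ENNReal.ofReal_mul (by apply div_nonneg <;> linarith)]
    congr 1
    rw [Real.zero_rpow (by linarith), show -c+1 = 1-c by ring]; ring
  · filter_upwards [ae_restrict_mem measurableSet_Ioc] with τ hτ
    exact Real.rpow_nonneg hτ.1.le _

lemma time_large {c B : ℝ} (hc : 1 < c) (hB : 0 < B) :
    ∫⁻ τ in Ioi B, (ENNReal.ofReal τ) ^ (-c) =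
      ENNReal.ofReal (1/(c-1)) * (ENNReal.ofReal B) ^ (1-c) := by
  have h1 : ∫⁻ τ in Ioi B, (ENNReal.ofReal τ) ^ (-c) = ∫⁻ τ in Ioi B, ENNReal.ofReal (τ ^ (-c)) :=
    setLIntegral_congr_fun measurableSet_Ioi fun τ hτ => ENNReal.ofReal_rpow_of_pos (hB.trans hτ)
  have hInt : IntegrableOn (fun τ : ℝ => τ ^ (-c)) (Ioi B) :=
    integrableOn_Ioi_rpow_of_lt (by linarith) hB
  rw [h1, ← ofReal_integral_eq_lintegral_ofReal hInt]
  · rw [integral_Ioi_rpow_of_lt (by linarith) hB,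
      ENNReal.ofReal_rpow_of_pos hB, ← ENNReal.ofReal_mul (by apply div_nonneg <;> linarith)]
    congr 1
    rw [show -c+1 = 1-c by ring, neg_div, ← div_neg, show -(1-c) = c - 1 by ring]; ring
  · filter_upwards [ae_restrict_mem measurableSet_Ioi] with τ hτ
    exact Real.rpow_nonneg (hB.trans hτ).le _

/-- time majorant of the kernel at distance `2^m` -/
def Psi (n : ℕ) (m : ℝ) (τ : ℝ) : ℝ≥0∞ :=
  if τ ≤ (2:ℝ) ^ (2 * m) then (2:ℝ≥0∞) ^ (-(m * n)) else (ENNReal.ofReal τ) ^ (-((n:ℝ)/2))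

lemma Psi_meas (n : ℕ) (m : ℝ) : Measurable (Psi n m) :=
  Measurable.ite (measurableSet_le measurable_id measurable_const) measurable_const (ofReal_rpow_meas _)

lemma one_le_time {h θ τ : ℝ} (hτ : 0 < τ) (hh : τ < h) (hθ : 0 ≤ θ) :
    1 ≤ (ENNReal.ofReal h) ^ θ * (ENNReal.ofReal τ) ^ (-θ) := by
  have e0 : ENNReal.ofReal τ ≠ 0 := by simpa using hτ
  calc (1:ℝ≥0∞) = (ENNReal.ofReal τ) ^ θ * (ENNReal.ofReal τ) ^ (-θ) := by
        rw [← ENNReal.rpow_add _ _ e0 ENNReal.ofReal_ne_top]; simp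
    _ ≤ _ := by
      gcongr

lemma time_Psi (n : ℕ) (hn : 3 ≤ n) (m : ℝ) {h θ : ℝ} (hθ : 0 ≤ θ) (hθ1 : θ < 1) :
    ∫⁻ τ in Ioo 0 h, Psi n m τ ≤ (ENNReal.ofReal h) ^ θ *
      ((ENNReal.ofReal (1/(1-θ)) + ENNReal.ofReal (1/((n:ℝ)/2+θ-1))) * 2 ^ (m * (2 - 2*θ - n))) := by
  have hn' : (3:ℝ) ≤ n := by exact_mod_cast hn
  set B : ℝ := (2:ℝ) ^ (2*m) with hB
  have hB0 : 0 < B := by positivity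
  have hmeas : Measurable (fun τ => (ENNReal.ofReal τ) ^ (-θ) * Psi n m τ) :=
    (ofReal_rpow_meas _).mul (Psi_meas n m)
  have hEB : ENNReal.ofReal B = 2 ^ (2*m) := ofReal_two_rpow _
  calc _ ≤ ∫⁻ τ in Ioo 0 h, (ENNReal.ofReal h) ^ θ * ((ENNReal.ofReal τ) ^ (-θ) * Psi n m τ) := by
        apply setLIntegral_mono (hmeas.const_mul _)
        intro τ hτ
        rw [← mul_assoc]
        exact le_mul_of_one_le_left (by simp) (one_le_time hτ.1 hτ.2 hθ)
    _ = (ENNReal.ofReal h) ^ θ * ∫⁻ τ in Ioo 0 h, ((ENNReal.ofReal τ) ^ (-θ) * Psi n m τ) :=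
        lintegral_const_mul _ hmeas
    _ ≤ (ENNReal.ofReal h) ^ θ * ∫⁻ τ in Ioc 0 B ∪ Ioi B, ((ENNReal.ofReal τ) ^ (-θ) * Psi n m τ) := by
        gcongr
        intro τ hτ
        by_cases hc : τ ≤ B
        · exact Or.inl ⟨hτ.1, hc⟩
        · exact Or.inr (not_le.mp hc)
    _ ≤ (ENNReal.ofReal h) ^ θ * ((∫⁻ τ in Ioc 0 B, ((ENNReal.ofReal τ) ^ (-θ) * Psi n m τ)) +
          ∫⁻ τ in Ioi B, ((ENNReal.ofReal τ) ^ (-θ) * Psi n m τ)) := by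
        gcongr; exact lintegral_union_le _ _ _
    _ = _ := by
        congr 1
        have h1 : ∫⁻ τ in Ioc 0 B, ((ENNReal.ofReal τ) ^ (-θ) * Psi n m τ) =
            (∫⁻ τ in Ioc 0 B, (ENNReal.ofReal τ) ^ (-θ)) * 2 ^ (-(m*n)) := by
          rw [← lintegral_mul_const _ (ofReal_rpow_meas _)]
          apply setLIntegral_congr_fun measurableSet_Ioc
          intro τ hτ
          simp only [Psi]; rw [if_pos hτ.2]
        have h2 : ∫⁻ τ in Ioi B, ((ENNReal.ofReal τ) ^ (-θ) * Psi n m τ) =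
            ∫⁻ τ in Ioi B, (ENNReal.ofReal τ) ^ (-((n:ℝ)/2+θ)) := by
          apply setLIntegral_congr_fun measurableSet_Ioi
          intro τ hτ
          have hτ0 : ENNReal.ofReal τ ≠ 0 := by simpa using hB0.trans hτ
          simp only [Psi]; rw [if_neg (not_le.mpr hτ), ← ENNReal.rpow_add _ _ hτ0 ENNReal.ofReal_ne_top]
          congr 1; ring
        rw [h1, h2, time_small hθ1 hB0, time_large (by linarith) hB0, hEB, ← ENNReal.rpow_mul,
          ← ENNReal.rpow_mul, add_mul, mul_assoc, two_rpow_add]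
        congr 3 <;> ring

lemma geom_sum (a b : ℝ) (ha : 0 < a) (hb : 0 < b) :
    ∑' m : ℤ, (2:ℝ≥0∞) ^ (-(max 0 (m:ℝ)) * (a+b) + m * a) ≠ ⊤ := by
  set κ : ℝ := min a b with hκ
  have hκ0 : 0 < κ := lt_min ha hb
  set x : ℝ := (2:ℝ) ^ (-κ) with hx
  have hx0 : 0 ≤ x := by positivity
  have hx1 : x < 1 := Real.rpow_lt_one_of_one_lt_of_neg (by norm_num) (by linarith)
  have hsum : Summable (fun m : ℤ => x ^ m.natAbs) := by
    apply Summable.of_nat_of_neg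
    · simpa using summable_geometric_of_lt_one hx0 hx1
    · simpa using summable_geometric_of_lt_one hx0 hx1
  have hle : ∀ m : ℤ, (2:ℝ≥0∞) ^ (-(max 0 (m:ℝ)) * (a+b) + m * a) ≤ ENNReal.ofReal (x ^ m.natAbs) := by
    intro m
    have : x ^ m.natAbs = (2:ℝ) ^ (-κ * |(m:ℝ)|) := by
      rw [hx, ← Real.rpow_natCast, ← Real.rpow_mul (by norm_num)]
      congr 2
      rw [Nat.cast_natAbs]; simp
    rw [this, ofReal_two_rpow]
    apply two_rpow_mono
    have h1 : κ ≤ a := min_le_left _ _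
    have h2 : κ ≤ b := min_le_right _ _
    rcases le_total 0 (m:ℝ) with hm | hm
    · rw [max_eq_right hm, abs_of_nonneg hm]; nlinarith
    · rw [max_eq_left hm, abs_of_nonpos hm]; nlinarith
  refine ne_top_of_le_ne_top ?_ (ENNReal.tsum_le_tsum hle)
  rw [← ENNReal.ofReal_tsum_of_nonneg (fun m => by positivity) hsum]
  exact ENNReal.ofReal_ne_top

lemma geom_sum_shift (a b : ℝ) (j : ℤ) :
    ∑' k : ℤ, (2:ℝ≥0∞) ^ (-(max (j:ℝ) (k:ℝ)) * (a+b) + k * a) =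
      (∑' m : ℤ, (2:ℝ≥0∞) ^ (-(max 0 (m:ℝ)) * (a+b) + m * a)) * 2 ^ (-((j:ℝ) * b)) := by
  rw [← ENNReal.tsum_mul_right, ← (Equiv.addRight j).tsum_eq]
  congr 1
  ext m
  rw [two_rpow_add]
  congr 1
  simp only [Equiv.coe_addRight]
  push_cast
  have : max (j:ℝ) (m + j) = max 0 (m:ℝ) + j := by
    rw [max_add, zero_add] 
  rw [this]; ring

def farC (n : ℕ) : ℝ≥0∞ := ENNReal.ofReal ((2 * n : ℝ) ^ ((n : ℝ) / 2)) * 2 ^ (2 * (n:ℝ))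

lemma one_le_farC (n : ℕ) (hn : 3 ≤ n) : 1 ≤ farC n := by
  have hn' : (3:ℝ) ≤ n := by exact_mod_cast hn
  unfold farC
  apply one_le_mul
  · rw [ENNReal.one_le_ofReal]
    exact Real.one_le_rpow (by linarith) (by positivity)
  · exact ENNReal.one_le_rpow (by norm_num) (by positivity)

lemma farC_ne_top (n : ℕ) : farC n ≠ ⊤ :=
  ENNReal.mul_ne_top ENNReal.ofReal_ne_top (two_rpow_ne_top _)

def nearSet (n : ℕ) (j : ℤ) : Set (Euc n) := annulus n (j-1) ∪ annulus n j ∪ annulus n (j+1)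

lemma nearSet_meas (n : ℕ) (j : ℤ) : MeasurableSet (nearSet n j) :=
  ((annulus_meas n _).union (annulus_meas n _)).union (annulus_meas n _)

lemma kernel_far (n : ℕ) (hn : 3 ≤ n) {τ : ℝ} (hτ : 0 < τ) (j k : ℤ) {x y : Euc n}
    (hxy : (2:ℝ) ^ (max j k - 2) ≤ ‖x - y‖) :
    hk n τ x y ≤ farC n * Psi n (max (j:ℝ) (k:ℝ)) τ := by
  have hm : max (j:ℝ) (k:ℝ) = ((max j k : ℤ) : ℝ) := by push_cast; rfl
  rw [hm]
  set m : ℤ := max j k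
  unfold Psi
  split_ifs with h
  · refine (hk_le_far n hn hτ (by positivity) x y hxy).trans (le_of_eq ?_)
    rw [farC, mul_assoc, two_rpow_add, ← Real.rpow_intCast, ofReal_two_rpow, ← ENNReal.rpow_mul]
    congr 2; push_cast; ring
  · exact (hk_le n hτ x y).trans (le_mul_of_one_le_left (by simp) (one_le_farC n hn))

lemma kernel_split (n : ℕ) (hn : 3 ≤ n) {τ : ℝ} (hτ : 0 < τ) (j k : ℤ) {x y : Euc n}
    (hx : x ∈ annulus n j) (hy : y ∈ annulus n k) (f : ℝ≥0∞) :
    hk n τ x y * f ≤ farC n * Psi n (max (j:ℝ) (k:ℝ)) τ * f +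
      (Iic ((2:ℝ) ^ (2 * ((j:ℝ) + 1)))).indicator
        (fun _ => hk n τ x y * (nearSet n j).indicator (fun _ => f) y) τ := by
  have hm : max (j:ℝ) (k:ℝ) = ((max j k : ℤ) : ℝ) := by push_cast; rfl
  have two : ∀ a : ℤ, (2:ℝ) ^ a = 2 * 2 ^ (a - 1) := by
    intro a
    rw [← zpow_one_add₀ (by norm_num)]; congr 1; ring
  by_cases h1 : k ≤ j - 2
  · refine le_trans ?_ le_self_add
    gcongr
    apply kernel_far n hn hτ
    rw [max_eq_left (by omega)]
    have h2 : (2:ℝ) ^ k ≤ 2 ^ (j-2) := zpow_le_zpow_right₀ (by norm_num) h1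
    have h3 := two (j-1)
    have h4 := norm_sub_norm_le x y
    rw [show j - 1 - 1 = j - 2 by ring] at h3
    linarith [hx.1, hy.2]
  by_cases h2 : j + 2 ≤ k
  · refine le_trans ?_ le_self_add
    gcongr
    apply kernel_far n hn hτ
    rw [max_eq_right (by omega)]
    have h2 : (2:ℝ) ^ j ≤ 2 ^ (k-2) := zpow_le_zpow_right₀ (by norm_num) (by omega)
    have h3 := two (k-1)
    have h4 := norm_sub_norm_le y x
    rw [norm_sub_rev] at h4
    rw [show k - 1 - 1 = k - 2 by ring] at h3
    linarith [hy.1, hx.2]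
  have hnear : y ∈ nearSet n j := by
    have : k = j - 1 ∨ k = j ∨ k = j + 1 := by omega
    rcases this with rfl | rfl | rfl
    · exact Or.inl (Or.inl hy)
    · exact Or.inl (Or.inr hy)
    · exact Or.inr hy
  by_cases h3 : τ ≤ (2:ℝ) ^ (2 * ((j:ℝ) + 1))
  · rw [indicator_of_mem (by exact h3), indicator_of_mem hnear]
    exact le_add_self
  · refine le_trans ?_ le_self_add
    have h5 : ¬ (τ ≤ (2:ℝ) ^ (2 * max (j:ℝ) k)) := by
      intro h
      apply h3
      refine h.trans ?_
      apply Real.rpow_le_rpow_of_exponent_le (by norm_num)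
      have : (k:ℝ) ≤ j + 1 := by exact_mod_cast (by omega : k ≤ j + 1)
      have : max (j:ℝ) k ≤ j + 1 := max_le (by linarith) this
      linarith
    gcongr
    unfold Psi
    rw [if_neg h5]
    exact (hk_le n hτ x y).trans (le_mul_of_one_le_left (by simp) (one_le_farC n hn))

lemma heatConv_meas (n : ℕ) {F : ℝ × Euc n → ℝ≥0∞} (hF : Measurable F) :
    Measurable (fun p : ℝ × Euc n => ∫⁻ y, hk n p.1 p.2 y * F (p.1, y)) := by
  apply Measurable.lintegral_prod_right'
    (f := fun z : (ℝ × Euc n) × Euc n => hk n z.1.1 z.1.2 z.2 * F (z.1.1, z.2))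
  have h1 : Measurable (fun z : (ℝ × Euc n) × Euc n => (z.1.1, z.2)) :=
    (measurable_fst.comp measurable_fst).prodMk measurable_snd
  have h2 : Measurable (fun z : (ℝ × Euc n) × Euc n => (z.1.1, (z.1.2, z.2))) :=
    (measurable_fst.comp measurable_fst).prodMk ((measurable_snd.comp measurable_fst).prodMk measurable_snd)
  exact ((hk_meas n).comp h2).mul (hF.comp h1)

/-- Near part of the Duhamel term. -/
lemma near_part (n : ℕ) {s' q q' θ β : ℝ} (hq' : 1 ≤ q') (hqq : q' ≤ q)
    (hθ : 0 ≤ θ) (hβ : β * q = ((n:ℝ)/2) * (q/q' - 1)) (hβθ : β + θ < 1)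
    {h : ℝ} {F : ℝ × Euc n → ℝ≥0∞} (hF : Measurable F) (N : ℝ≥0∞)
    (hN : ∀ᵐ τ ∂(volume.restrict (Ioo 0 h)), HB n s' q' N (fun y => F (τ, y))) (j : ℤ) :
    (∫⁻ x, (∫⁻ τ in Ioo 0 h, (Iic ((2:ℝ) ^ (2 * ((j:ℝ) + 1)))).indicator
      (fun _ => ∫⁻ y, hk n τ x y * (nearSet n j).indicator (fun y => F (τ, y)) y) τ) ^ q) ^ (1/q) ≤
    3 * N * 2 ^ |s'| * 2 ^ (-((j:ℝ) * s')) * ((ENNReal.ofReal h) ^ θ *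
      (ENNReal.ofReal (1/(1-(β+θ))) * 2 ^ (2 * ((j:ℝ)+1) * (1 - (β+θ))))) := by
  have hq0' : 0 < q' := by linarith
  have hq1 : 1 ≤ q := by linarith
  have hq0 : 0 < q := by linarith
  set B : ℝ := (2:ℝ) ^ (2 * ((j:ℝ) + 1)) with hB
  have hB0 : 0 < B := by positivity
  obtain ⟨Fn, hFn⟩ : ∃ Fn : ℝ × Euc n → ℝ≥0∞, Fn = fun z => (nearSet n j).indicator (fun y => F (z.1, y)) z.2 :=
    ⟨_, rfl⟩
  have hFnm : Measurable Fn := by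
    have : Fn = (Prod.snd ⁻¹' (nearSet n j)).indicator F := by
      rw [hFn]; ext z
      by_cases hz : z.2 ∈ nearSet n j
      · rw [indicator_of_mem hz, indicator_of_mem (by exact hz)]
      · rw [indicator_of_notMem hz, indicator_of_notMem (by exact hz)]
    rw [this]
    exact hF.indicator (measurable_snd (nearSet_meas n j))
  obtain ⟨H, hH⟩ : ∃ H : ℝ × Euc n → ℝ≥0∞, H = fun p => ∫⁻ y, hk n p.1 p.2 y * Fn (p.1, y) := ⟨_, rfl⟩
  have hHm : Measurable H := by rw [hH]; exact heatConv_meas n hFnm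
  obtain ⟨μ, hμ⟩ : ∃ μ : Measure ℝ, μ = volume.restrict (Iic B ∩ Ioo 0 h) := ⟨_, rfl⟩
  have hsf : SFinite μ := by rw [hμ]; infer_instance
  have e1 : ∀ x, ∫⁻ τ in Ioo 0 h, (Iic B).indicator
      (fun _ => ∫⁻ y, hk n τ x y * (nearSet n j).indicator (fun y => F (τ, y)) y) τ = ∫⁻ τ, H (τ, x) ∂μ := by
    intro x
    have : ∀ τ, (Iic B).indicator
      (fun _ => ∫⁻ y, hk n τ x y * (nearSet n j).indicator (fun y => F (τ, y)) y) τ =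
        (Iic B).indicator (fun τ => H (τ, x)) τ := by
      intro τ
      by_cases hτ : τ ∈ Iic B
      · rw [indicator_of_mem hτ, indicator_of_mem hτ, hH, hFn]
      · rw [indicator_of_notMem hτ, indicator_of_notMem hτ]
    simp_rw [this]
    rw [lintegral_indicator measurableSet_Iic, Measure.restrict_restrict measurableSet_Iic, hμ]
  simp_rw [e1]
  have hμmem : ∀ᵐ τ ∂μ, τ ∈ Iic B ∩ Ioo 0 h := by
    rw [hμ]; exact ae_restrict_mem (measurableSet_Iic.inter measurableSet_Ioo)
  have hμN : ∀ᵐ τ ∂μ, HB n s' q' N (fun y => F (τ, y)) := by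
    rw [hμ]; exact ae_restrict_of_ae_restrict_of_subset inter_subset_right hN
  obtain ⟨φ, hφ⟩ : ∃ φ : ℝ → ℝ≥0∞, φ = fun τ => (ENNReal.ofReal h) ^ θ * (ENNReal.ofReal τ) ^ (-(β+θ)) := ⟨_, rfl⟩
  have hφm : Measurable φ := by rw [hφ]; exact (ofReal_rpow_meas _).const_mul _
  have key := minkowski_time (μ := μ) hHm hφm (q := q) (K := 3 * N * 2 ^ |s'| * 2 ^ (-((j:ℝ) * s'))) ?_ ?_ hq1 ?_
  · refine key.trans ?_
    gcongr
    rw [hφ]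
    rw [lintegral_const_mul _ (ofReal_rpow_meas _)]
    gcongr
    calc _ ≤ ∫⁻ τ in Ioc 0 B, (ENNReal.ofReal τ) ^ (-(β+θ)) := by
          rw [hμ]
          apply lintegral_mono_set
          rintro τ ⟨h1, h2⟩
          exact ⟨h2.1, h1⟩
      _ = _ := by
          rw [time_small hβθ hB0, hB, ofReal_two_rpow, ← ENNReal.rpow_mul]
  · filter_upwards [hμmem] with τ hτ
    have hτ0 : 0 < τ := hτ.2.1
    have hh0 : 0 < h := hτ0.trans hτ.2.2
    rw [hφ]
    simp only [ENNReal.ofReal_rpow_of_pos hτ0, ENNReal.ofReal_rpow_of_pos hh0]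
    apply mul_ne_zero
    · simpa using Real.rpow_pos_of_pos hh0 _
    · simpa using Real.rpow_pos_of_pos hτ0 _
  · filter_upwards [hμmem] with τ hτ
    have hτ0 : 0 < τ := hτ.2.1
    have hh0 : 0 < h := hτ0.trans hτ.2.2
    rw [hφ]
    simp only [ENNReal.ofReal_rpow_of_pos hτ0, ENNReal.ofReal_rpow_of_pos hh0]
    exact ENNReal.mul_ne_top ENNReal.ofReal_ne_top ENNReal.ofReal_ne_top
  · filter_upwards [hμmem, hμN] with τ hτ hτN
    have hτ0 : 0 < τ := hτ.2.1
    have e0 : ENNReal.ofReal τ ≠ 0 := by simpa using hτ0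
    have hFτ : Measurable (fun y => Fn (τ, y)) := hFnm.comp measurable_prodMk_left
    have h1 := heat_smoothing n hτ0 hFτ hq' hqq
    have hpiece : ∀ k : ℤ, |(k:ℝ) - j| ≤ 1 → ∫⁻ y in annulus n k, F (τ, y) ^ q' ≤
        (N * 2 ^ |s'| * 2 ^ (-((j:ℝ) * s'))) ^ q' := by
      intro k hk
      refine (hτN.pow_le hq' k).trans (ENNReal.rpow_le_rpow ?_ hq0'.le)
      rw [mul_assoc]
      gcongr
      rw [two_rpow_add]
      apply two_rpow_mono
      have : -(((k:ℝ) - j) * s') ≤ |s'| := by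
        calc _ ≤ |((k:ℝ) - j) * s'| := neg_le_abs _
          _ = |(k:ℝ) - j| * |s'| := abs_mul _ _
          _ ≤ 1 * |s'| := by gcongr
          _ = _ := one_mul _
      nlinarith
    have h2 : ∫⁻ y, Fn (τ, y) ^ q' ≤ (3 * N * 2 ^ |s'| * 2 ^ (-((j:ℝ) * s'))) ^ q' := by
      have : ∀ y, Fn (τ, y) ^ q' = (nearSet n j).indicator (fun y => F (τ, y) ^ q') y := by
        intro y
        rw [hFn]
        by_cases hy : y ∈ nearSet n j
        · simp only [indicator_of_mem hy]
        · simp only [indicator_of_notMem hy]; simp [hq0']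
      simp_rw [this]
      rw [lintegral_indicator (nearSet_meas n j)]
      calc _ ≤ (∫⁻ y in annulus n (j-1), F (τ, y) ^ q') + (∫⁻ y in annulus n j, F (τ, y) ^ q') +
            (∫⁻ y in annulus n (j+1), F (τ, y) ^ q') := by
            refine (lintegral_union_le _ _ _).trans ?_
            gcongr
            exact lintegral_union_le _ _ _
        _ ≤ (N * 2 ^ |s'| * 2 ^ (-((j:ℝ) * s'))) ^ q' + (N * 2 ^ |s'| * 2 ^ (-((j:ℝ) * s'))) ^ q' +
            (N * 2 ^ |s'| * 2 ^ (-((j:ℝ) * s'))) ^ q' := by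
            gcongr
            · exact hpiece _ (by push_cast; simp)
            · exact hpiece _ (by simp)
            · exact hpiece _ (by push_cast; simp)
        _ = 3 * (N * 2 ^ |s'| * 2 ^ (-((j:ℝ) * s'))) ^ q' := by ring
        _ ≤ 3 ^ q' * (N * 2 ^ |s'| * 2 ^ (-((j:ℝ) * s'))) ^ q' := by
            gcongr
            conv_lhs => rw [← ENNReal.rpow_one 3]
            exact ENNReal.rpow_le_rpow_of_exponent_le (by norm_num) hq'
        _ = _ := by rw [← ENNReal.mul_rpow_of_nonneg _ _ hq0'.le]; congr 1; ring
    have h3 : (ENNReal.ofReal τ) ^ (-β) ≤ φ τ := by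
      rw [hφ]; dsimp only; rw [neg_add, ENNReal.rpow_add _ _ e0 ENNReal.ofReal_ne_top, mul_left_comm]
      exact le_mul_of_one_le_right (by simp) (one_le_time hτ0 hτ.2.2 hθ)
    have h4 : ∫⁻ x, H (τ, x) ^ q ≤ (ENNReal.ofReal τ) ^ (-((n : ℝ) / 2) * (q / q' - 1)) * (∫⁻ y, Fn (τ, y) ^ q') ^ (q / q') := by
      rw [hH]; exact h1
    calc _ ≤ _ := h4
      _ ≤ ((ENNReal.ofReal τ) ^ (-β)) ^ q * ((3 * N * 2 ^ |s'| * 2 ^ (-((j:ℝ) * s'))) ^ q') ^ (q/q') := by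
        gcongr
        apply le_of_eq
        rw [← ENNReal.rpow_mul]; congr 1
        linarith
      _ = ((3 * N * 2 ^ |s'| * 2 ^ (-((j:ℝ) * s'))) * (ENNReal.ofReal τ) ^ (-β)) ^ q := by
        rw [ENNReal.mul_rpow_of_nonneg _ _ hq0.le, ← ENNReal.rpow_mul _ q', mul_div_cancel₀ _ hq0'.ne', mul_comm]
      _ ≤ _ := by gcongr

/-- Splitting of the heat extension into far and near parts. -/
lemma heat_split (n : ℕ) (hn : 3 ≤ n) {τ : ℝ} (hτ : 0 < τ) (j : ℤ) {x : Euc n}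
    (hx : x ∈ annulus n j) {f : Euc n → ℝ≥0∞} (hf : Measurable f) :
    ∫⁻ y, hk n τ x y * f y ≤ (∑' k : ℤ, farC n * Psi n (max (j:ℝ) (k:ℝ)) τ * ∫⁻ y in annulus n k, f y) +
      (Iic ((2:ℝ) ^ (2 * ((j:ℝ) + 1)))).indicator
        (fun _ => ∫⁻ y, hk n τ x y * (nearSet n j).indicator f y) τ := by
  set I := Iic ((2:ℝ) ^ (2 * ((j:ℝ) + 1))) with hI
  have e1 : I.indicator (fun _ => ∫⁻ y, hk n τ x y * (nearSet n j).indicator f y) τ =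
      ∑' k : ℤ, ∫⁻ y in annulus n k, I.indicator (fun _ => hk n τ x y * (nearSet n j).indicator f y) τ := by
    rw [← lintegral_eq_tsum n hn]
    by_cases h : τ ∈ I
    · simp only [indicator_of_mem h]
    · simp only [indicator_of_notMem h]; simp
  rw [e1, lintegral_eq_tsum n hn, ← ENNReal.tsum_add]
  apply ENNReal.tsum_le_tsum
  intro k
  rw [← lintegral_const_mul _ hf, ← lintegral_add_left (hf.const_mul _)]
  apply setLIntegral_mono' (annulus_meas n k)
  intro y hy
  have := kernel_split n hn hτ j k hx hy (f y)
  have e2 : (nearSet n j).indicator (fun _ => f y) y = (nearSet n j).indicator f y := by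
    by_cases h : y ∈ nearSet n j
    · simp only [indicator_of_mem h]
    · simp only [indicator_of_notMem h]
  rw [e2] at this
  exact this

lemma duhamel_bound (n : ℕ) (hn : 3 ≤ n) {s s' q q' θ : ℝ} (hq' : 1 ≤ q') (hqq : q' ≤ q)
    (hss : s < s') (ha : 0 < (n:ℝ) - n/q' - s') (hb : 0 < s + n/q) (hθ : 0 ≤ θ)
    (hρ : s' + n/q' - s - n/q = 2 - 2*θ) :
    ∃ C : ℝ≥0∞, C ≠ ⊤ ∧ ∀ (h : ℝ) (F : ℝ × Euc n → ℝ≥0∞), Measurable F → ∀ N : ℝ≥0∞,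
      (∀ᵐ τ ∂(volume.restrict (Ioo 0 h)), HB n s' q' N (fun y => F (τ, y))) →
      HB n s q (C * (ENNReal.ofReal h) ^ θ * N)
        (fun x => ∫⁻ τ in Ioo 0 h, ∫⁻ y, hk n τ x y * F (τ, y)) := by
  have hq0' : 0 < q' := by linarith
  have hq1 : 1 ≤ q := by linarith
  have hq0 : 0 < q := by linarith
  have hn0 : (0:ℝ) ≤ n := by positivity
  have hdiv : (n:ℝ)/q ≤ n/q' := by gcongr
  have hθ1 : θ < 1 := by linarith
  obtain ⟨β, hβ⟩ : ∃ β : ℝ, β = ((n:ℝ)/q' - n/q)/2 := ⟨_, rfl⟩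
  have hβθ : 1 - (β + θ) = (s' - s)/2 := by rw [hβ]; linarith
  have hβq : β * q = ((n:ℝ)/2) * (q/q' - 1) := by rw [hβ]; field_simp
  set V := volume (Metric.ball (0 : Euc n) 1) with hV
  have hVt : V ≠ ⊤ := measure_ball_lt_top.ne
  have e0 : 0 ≤ 1 - 1/q' := by rw [sub_nonneg, div_le_one hq0']; exact hq'
  set a := (n:ℝ) - n/q' - s' with haa
  set b := s + n/q with hbb
  set S := ∑' m : ℤ, (2:ℝ≥0∞) ^ (-(max 0 (m:ℝ)) * (a+b) + m * a) with hS
  have hSt : S ≠ ⊤ := geom_sum a b ha hb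
  set Cp := (ENNReal.ofReal (1/(1-θ)) + ENNReal.ofReal (1/((n:ℝ)/2+θ-1))) with hCp
  have hCpt : Cp ≠ ⊤ := by simp [hCp]
  refine ⟨farC n * V ^ (1 - 1/q') * Cp * S * V ^ (1/q) +
    3 * 2 ^ |s'| * ENNReal.ofReal (1/(1-(β+θ))) * 2 ^ (s' - s), ?_, ?_⟩
  · apply ENNReal.add_ne_top.mpr
    constructor
    · refine ENNReal.mul_ne_top (ENNReal.mul_ne_top (ENNReal.mul_ne_top (ENNReal.mul_ne_top (farC_ne_top n) ?_) hCpt) hSt) ?_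
      · exact ENNReal.rpow_ne_top_of_nonneg e0 hVt
      · exact ENNReal.rpow_ne_top_of_nonneg (by positivity) hVt
    · refine ENNReal.mul_ne_top (ENNReal.mul_ne_top (ENNReal.mul_ne_top (by norm_num) (two_rpow_ne_top _)) ENNReal.ofReal_ne_top) (two_rpow_ne_top _)
  intro h F hF N hN j
  obtain ⟨P, hP⟩ : ∃ P : ℝ≥0∞, P = farC n * (N * V ^ (1 - 1/q')) * ((ENNReal.ofReal h) ^ θ * Cp) * (S * 2 ^ (-((j:ℝ) * b))) := ⟨_, rfl⟩
  obtain ⟨Q, hQ⟩ : ∃ Q : Euc n → ℝ≥0∞, Q = fun x => ∫⁻ τ in Ioo 0 h, (Iic ((2:ℝ) ^ (2 * ((j:ℝ) + 1)))).indicator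
      (fun _ => ∫⁻ y, hk n τ x y * (nearSet n j).indicator (fun y => F (τ, y)) y) τ := ⟨_, rfl⟩
  have hFτ : ∀ τ, Measurable (fun y => F (τ, y)) := fun τ => hF.comp measurable_prodMk_left
  -- measurability of Q
  have hQm : Measurable Q := by
    have hFnm : Measurable ((Prod.snd ⁻¹' (nearSet n j)).indicator F) :=
      hF.indicator (measurable_snd (nearSet_meas n j))
    have h1 := (heatConv_meas n hFnm).indicator
      (measurable_fst (measurableSet_Iic (a := (2:ℝ) ^ (2 * ((j:ℝ) + 1)))) : MeasurableSet (Prod.fst ⁻¹' (Iic ((2:ℝ) ^ (2 * ((j:ℝ) + 1)))) : Set (ℝ × Euc n)))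
    have h2 := Measurable.lintegral_prod_left' (μ := volume.restrict (Ioo 0 h)) h1
    rw [hQ]
    convert h2 using 3 with x
    rfl
  -- pointwise estimate
  have hpt : ∀ x ∈ annulus n j, ∫⁻ τ in Ioo 0 h, ∫⁻ y, hk n τ x y * F (τ, y) ≤ P + Q x := by
    intro x hx
    have hmeasP : ∀ k : ℤ, Measurable (fun τ => farC n * Psi n (max (j:ℝ) (k:ℝ)) τ * ∫⁻ y in annulus n k, F (τ, y)) := by
      intro k
      exact ((Psi_meas n _).const_mul _).mul (Measurable.lintegral_prod_right' hF)
    calc _ ≤ ∫⁻ τ in Ioo 0 h, ((∑' k : ℤ, farC n * Psi n (max (j:ℝ) (k:ℝ)) τ * ∫⁻ y in annulus n k, F (τ, y)) +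
          (Iic ((2:ℝ) ^ (2 * ((j:ℝ) + 1)))).indicator
        (fun _ => ∫⁻ y, hk n τ x y * (nearSet n j).indicator (fun y => F (τ, y)) y) τ) := by
          apply setLIntegral_mono' measurableSet_Ioo
          intro τ hτ
          exact heat_split n hn hτ.1 j hx (hFτ τ)
      _ = (∫⁻ τ in Ioo 0 h, (∑' k : ℤ, farC n * Psi n (max (j:ℝ) (k:ℝ)) τ * ∫⁻ y in annulus n k, F (τ, y))) + Q x := by
          rw [lintegral_add_left (Measurable.tsum hmeasP), hQ]
      _ = (∑' k : ℤ, ∫⁻ τ in Ioo 0 h, farC n * Psi n (max (j:ℝ) (k:ℝ)) τ * ∫⁻ y in annulus n k, F (τ, y)) + Q x := by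
          rw [lintegral_tsum (fun k => (hmeasP k).aemeasurable)]
      _ ≤ P + Q x := by
          gcongr
          calc _ ≤ ∑' k : ℤ, farC n * (N * V ^ (1 - 1/q')) * ((ENNReal.ofReal h) ^ θ * Cp) *
                2 ^ (-(max (j:ℝ) (k:ℝ)) * (a+b) + k * a) := by
                apply ENNReal.tsum_le_tsum
                intro k
                calc _ ≤ ∫⁻ τ in Ioo 0 h, (farC n * (N * V ^ (1 - 1/q') * 2 ^ ((k:ℝ) * a))) * Psi n (max (j:ℝ) (k:ℝ)) τ := by
                      apply lintegral_mono_ae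
                      filter_upwards [hN] with τ hτ
                      have := hτ.l1 (hFτ τ) hq' k
                      calc _ ≤ farC n * Psi n (max (j:ℝ) (k:ℝ)) τ * (N * V ^ (1 - 1/q') * 2 ^ ((k:ℝ) * a)) := by
                            gcongr
                        _ = _ := by ring
                  _ = (farC n * (N * V ^ (1 - 1/q') * 2 ^ ((k:ℝ) * a))) * ∫⁻ τ in Ioo 0 h, Psi n (max (j:ℝ) (k:ℝ)) τ :=
                      lintegral_const_mul _ (Psi_meas _ _)
                  _ ≤ (farC n * (N * V ^ (1 - 1/q') * 2 ^ ((k:ℝ) * a))) * ((ENNReal.ofReal h) ^ θ *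
                        (Cp * 2 ^ (max (j:ℝ) (k:ℝ) * (2 - 2*θ - n)))) := by
                      gcongr
                      exact time_Psi n hn _ hθ hθ1
                  _ = farC n * (N * V ^ (1 - 1/q')) * ((ENNReal.ofReal h) ^ θ * Cp) *
                      (2 ^ (max (j:ℝ) (k:ℝ) * (2 - 2*θ - n)) * 2 ^ ((k:ℝ) * a)) := by ring
                  _ = _ := by
                      rw [two_rpow_add]
                      congr 2
                      have : 2 - 2*θ - n = -(a+b) := by rw [haa, hbb]; linarith
                      rw [this]; ring
            _ = _ := by rw [ENNReal.tsum_mul_left, geom_sum_shift, hP]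
  have hnear := near_part n hq' hqq hθ hβq (by linarith) hF N hN j
  calc _ ≤ (∫⁻ x in annulus n j, ((fun _ : Euc n => P) + Q : Euc n → ℝ≥0∞) x ^ q) ^ (1/q) := by
        apply ENNReal.rpow_le_rpow _ (by positivity)
        apply setLIntegral_mono' (annulus_meas n j)
        intro x hx
        exact ENNReal.rpow_le_rpow (hpt x hx) hq0.le
    _ ≤ (∫⁻ x in annulus n j, (fun _ => P) x ^ q) ^ (1/q) + (∫⁻ x in annulus n j, Q x ^ q) ^ (1/q) :=
        ENNReal.lintegral_Lp_add_le measurable_const.aemeasurable hQm.aemeasurable hq1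
    _ ≤ P * (V ^ (1/q) * 2 ^ ((j:ℝ) * n/q)) + 3 * N * 2 ^ |s'| * 2 ^ (-((j:ℝ) * s')) * ((ENNReal.ofReal h) ^ θ *
      (ENNReal.ofReal (1/(1-(β+θ))) * 2 ^ (2 * ((j:ℝ)+1) * (1 - (β+θ))))) := by
        gcongr ?_ + ?_
        · simp only [lintegral_const, Measure.restrict_apply, MeasurableSet.univ, univ_inter]
          rw [ENNReal.mul_rpow_of_nonneg _ _ (by positivity), ← ENNReal.rpow_mul, mul_one_div_cancel hq0.ne', ENNReal.rpow_one]
          gcongr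
          calc _ ≤ (V * 2 ^ ((j:ℝ) * n)) ^ (1/q) := ENNReal.rpow_le_rpow (vol_annulus n j) (by positivity)
            _ = _ := by
              rw [ENNReal.mul_rpow_of_nonneg _ _ (by positivity), ← ENNReal.rpow_mul]
              congr 2; ring
        · refine le_trans ?_ hnear
          apply ENNReal.rpow_le_rpow _ (by positivity)
          rw [hQ]
          exact setLIntegral_le_lintegral _ _
    _ = _ := by
        have i1 : (2:ℝ≥0∞) ^ (-((j:ℝ) * b)) * 2 ^ ((j:ℝ) * n/q) = 2 ^ (-((j:ℝ) * s)) := by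
          rw [two_rpow_add]; congr 1; rw [hbb]; ring
        have i2 : (2:ℝ≥0∞) ^ (-((j:ℝ) * s')) * 2 ^ (2 * ((j:ℝ)+1) * (1 - (β+θ))) = 2 ^ (s' - s) * 2 ^ (-((j:ℝ) * s)) := by
          rw [two_rpow_add, two_rpow_add]; congr 1; rw [hβθ]; ring
        have r1 : P * (V ^ (1/q) * 2 ^ ((j:ℝ) * n/q)) =
            farC n * (N * V ^ (1 - 1/q')) * ((ENNReal.ofReal h) ^ θ * Cp) * S * V ^ (1/q) * (2 ^ (-((j:ℝ) * b)) * 2 ^ ((j:ℝ) * n/q)) := by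
          rw [hP]; ring
        have r2 : 3 * N * 2 ^ |s'| * 2 ^ (-((j:ℝ) * s')) * ((ENNReal.ofReal h) ^ θ *
            (ENNReal.ofReal (1/(1-(β+θ))) * 2 ^ (2 * ((j:ℝ)+1) * (1 - (β+θ))))) =
            3 * N * 2 ^ |s'| * (ENNReal.ofReal h) ^ θ * ENNReal.ofReal (1/(1-(β+θ))) *
              (2 ^ (-((j:ℝ) * s')) * 2 ^ (2 * ((j:ℝ)+1) * (1 - (β+θ)))) := by ring
        rw [r1, r2, i1, i2]; ring

lemma HB.mono {n : ℕ} {s q : ℝ} {N N' : ℝ≥0∞} {g g' : Euc n → ℝ≥0∞} (h : HB n s q N g) (hq : 1 ≤ q)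
    (hN : N ≤ N') (hg : ∀ᵐ x, g' x ≤ g x) : HB n s q N' g' := by
  have hq0 : 0 < q := by linarith
  intro k
  refine le_trans ?_ ((h k).trans (by gcongr))
  apply ENNReal.rpow_le_rpow _ (by positivity)
  apply lintegral_mono_ae
  filter_upwards [ae_restrict_of_ae hg] with x hx
  exact ENNReal.rpow_le_rpow hx hq0.le

lemma HB.add {n : ℕ} {s q : ℝ} {N N' : ℝ≥0∞} {g g' : Euc n → ℝ≥0∞} (h : HB n s q N g) (h' : HB n s q N' g')
    (hq : 1 ≤ q) (hg : Measurable g) (hg' : Measurable g') : HB n s q (N + N') (fun x => g x + g' x) := by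
  intro k
  rw [add_mul]
  refine le_trans ?_ (add_le_add (h k) (h' k))
  exact ENNReal.lintegral_Lp_add_le hg.aemeasurable hg'.aemeasurable hq

lemma HB.const_mul {n : ℕ} {s q : ℝ} {N : ℝ≥0∞} {g : Euc n → ℝ≥0∞} (h : HB n s q N g) (hq : 1 ≤ q)
    (hg : Measurable g) (c : ℝ≥0∞) : HB n s q (c * N) (fun x => c * g x) := by
  have hq0 : 0 < q := by linarith
  intro k
  simp_rw [ENNReal.mul_rpow_of_nonneg _ _ hq0.le]
  rw [lintegral_const_mul _ (hg.pow_const _), ENNReal.mul_rpow_of_nonneg _ _ (by positivity),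
    ← ENNReal.rpow_mul, mul_one_div_cancel hq0.ne', ENNReal.rpow_one, mul_assoc]
  gcongr
  exact h k

lemma HB.ae_zero {n : ℕ} (hn : 3 ≤ n) {s q : ℝ} {g : Euc n → ℝ≥0∞} (h : HB n s q 0 g) (hq : 1 ≤ q)
    (hg : Measurable g) : g =ᵐ[volume] 0 := by
  have hq0 : 0 < q := by linarith
  have h1 : ∫⁻ x, g x ^ q = 0 := by
    rw [lintegral_eq_tsum n hn, ENNReal.tsum_eq_zero]
    intro k
    have := h.pow_le hq k
    simpa [hq0] using this
  rw [lintegral_eq_zero_iff (hg.pow_const _)] at h1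
  filter_upwards [h1] with x hx
  have hx' : g x ^ q = 0 := hx
  rcases ENNReal.rpow_eq_zero_iff.mp hx' with h | h
  · exact h.1
  · linarith [h.2]

lemma herz_HB {n : ℕ} {s q : ℝ} (hq : 1 ≤ q) {N : ℝ≥0∞} {f : Euc n → ℝ} 
    (h : herzNorm n s (ENNReal.ofReal q) ⊤ f ≤ N) : HB n s q N (fun x => ‖f x‖ₑ) := by
  have hq0 : 0 < q := by linarith
  intro k
  unfold herzNorm at h
  rw [if_pos rfl] at h
  have h1 := (le_iSup _ k).trans h
  rw [eLpNorm_indicator_eq_eLpNorm_restrict (annulus_meas n k), eLpNorm_eq_lintegral_rpow_enorm_toReal (by simpa using hq0) ENNReal.ofReal_ne_top,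
    ENNReal.toReal_ofReal hq0.le, ofReal_two_rpow] at h1
  calc (∫⁻ x in annulus n k, ‖f x‖ₑ ^ q) ^ (1/q)
      = 2 ^ ((k:ℝ) * s) * (∫⁻ x in annulus n k, ‖f x‖ₑ ^ q) ^ (1/q) * 2 ^ (-((k:ℝ)*s)) := by
        rw [mul_right_comm, two_rpow_add]; simp
    _ ≤ _ := by gcongr

lemma weight_le {n : ℕ} (γ : ℝ) {k : ℤ} {x : Euc n} (hx : x ∈ annulus n k) :
    ENNReal.ofReal (‖x‖ ^ γ) ≤ 2 ^ |γ| * 2 ^ ((k:ℝ) * γ) := by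
  rw [two_rpow_add, ← ofReal_two_rpow]
  apply ENNReal.ofReal_le_ofReal
  obtain ⟨h1, h2⟩ := hx
  have hp : (0:ℝ) < 2 ^ (k-1) := by positivity
  rcases le_total 0 γ with hγ | hγ
  · calc ‖x‖ ^ γ ≤ ((2:ℝ) ^ k) ^ γ := Real.rpow_le_rpow (norm_nonneg _) h2.le hγ
      _ = (2:ℝ) ^ ((k:ℝ) * γ) := by rw [← Real.rpow_intCast, ← Real.rpow_mul (by norm_num)]
      _ ≤ _ := Real.rpow_le_rpow_of_exponent_le (by norm_num) (by linarith [abs_nonneg γ])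
  · calc ‖x‖ ^ γ ≤ ((2:ℝ) ^ (k-1)) ^ γ := Real.rpow_le_rpow_of_nonpos hp h1 hγ
      _ = (2:ℝ) ^ (((k-1:ℤ):ℝ) * γ) := by rw [← Real.rpow_intCast, ← Real.rpow_mul (by norm_num)]
      _ ≤ _ := Real.rpow_le_rpow_of_exponent_le (by norm_num) (by
        rw [abs_of_nonpos hγ]; push_cast; linarith)

lemma weight_meas (n : ℕ) (γ : ℝ) : Measurable (fun x : Euc n => ENNReal.ofReal (‖x‖ ^ γ)) :=
  ENNReal.measurable_ofReal.comp (measurable_norm.pow_const γ)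

lemma HB.nonlin {n : ℕ} {s q γ α : ℝ} (hα : 1 < α) (hq : α ≤ q) {N₁ N₂ : ℝ≥0∞} {v w : Euc n → ℝ≥0∞}
    (hv : Measurable v) (hw : Measurable w) (h1 : HB n s q N₁ v) (h2 : HB n s q N₂ w) :
    HB n (α * s - γ) (q / α) (2 ^ |γ| * N₁ ^ (α - 1) * N₂)
      (fun x => ENNReal.ofReal (‖x‖ ^ γ) * (v x ^ (α - 1) * w x)) := by
  have hα0 : 0 < α := by linarith
  have hq0 : 0 < q := by linarith
  have hα1 : 0 ≤ α - 1 := by linarith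
  have hp0 : 0 < q / α := by positivity
  intro k
  have hm : Measurable (fun x => v x ^ (α - 1) * w x) := (hv.pow_const _).mul hw
  have hH := ENNReal.lintegral_mul_norm_pow_le (μ := volume.restrict (annulus n k))
    (f := fun x => v x ^ q) (g := fun x => w x ^ q) (hv.pow_const _).aemeasurable (hw.pow_const _).aemeasurable
    (p := (α-1)/α) (q := 1/α) (by positivity) (by positivity) (by field_simp; ring)
  calc _ ≤ (∫⁻ x in annulus n k, (2 ^ |γ| * 2 ^ ((k:ℝ) * γ)) ^ (q/α) * (v x ^ (α - 1) * w x) ^ (q/α)) ^ (1/(q/α)) := by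
        apply ENNReal.rpow_le_rpow _ (by positivity)
        apply setLIntegral_mono' (annulus_meas n k)
        intro x hx
        rw [← ENNReal.mul_rpow_of_nonneg _ _ hp0.le]
        apply ENNReal.rpow_le_rpow _ hp0.le
        exact mul_le_mul' (weight_le γ hx) le_rfl
    _ = 2 ^ |γ| * 2 ^ ((k:ℝ) * γ) * (∫⁻ x in annulus n k, (v x ^ (α - 1) * w x) ^ (q/α)) ^ (1/(q/α)) := by
        rw [lintegral_const_mul _ (hm.pow_const _), ENNReal.mul_rpow_of_nonneg _ _ (by positivity),
          ← ENNReal.rpow_mul, mul_one_div_cancel hp0.ne', ENNReal.rpow_one]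
    _ ≤ 2 ^ |γ| * 2 ^ ((k:ℝ) * γ) * (((∫⁻ x in annulus n k, v x ^ q) ^ (1/q)) ^ (α-1) * (∫⁻ x in annulus n k, w x ^ q) ^ (1/q)) := by
        gcongr
        have e1 : ∫⁻ x in annulus n k, (v x ^ (α - 1) * w x) ^ (q/α) =
            ∫⁻ x in annulus n k, (v x ^ q) ^ ((α-1)/α) * (w x ^ q) ^ (1/α) := by
          congr 1; ext x
          rw [ENNReal.mul_rpow_of_nonneg _ _ hp0.le, ← ENNReal.rpow_mul, ← ENNReal.rpow_mul, ← ENNReal.rpow_mul]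
          congr 2 <;> field_simp
        rw [e1]
        refine (ENNReal.rpow_le_rpow hH (by positivity)).trans (le_of_eq ?_)
        rw [ENNReal.mul_rpow_of_nonneg _ _ (by positivity), ← ENNReal.rpow_mul, ← ENNReal.rpow_mul, ← ENNReal.rpow_mul]
        congr 2 <;> field_simp
    _ ≤ 2 ^ |γ| * 2 ^ ((k:ℝ) * γ) * ((N₁ * 2 ^ (-((k:ℝ) * s))) ^ (α-1) * (N₂ * 2 ^ (-((k:ℝ) * s)))) := by
        gcongr
        · exact h1 k
        · exact h2 k
    _ = 2 ^ |γ| * N₁ ^ (α-1) * N₂ * (2 ^ ((k:ℝ) * γ) * 2 ^ (-((k:ℝ) * s) * (α-1)) * 2 ^ (-((k:ℝ) * s))) := by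
        rw [ENNReal.mul_rpow_of_nonneg _ _ hα1, ← ENNReal.rpow_mul]; ring
    _ = _ := by
        rw [two_rpow_add, two_rpow_add]; congr 2; ring

lemma HB.phi {n : ℕ} {s q γ α η : ℝ} (hα : 1 < α) (hq : 1 ≤ q) (hη : 0 ≤ γ + η) {N M : ℝ≥0∞}
    {w φ : Euc n → ℝ≥0∞} (K : ℤ) (hM : ∀ x, φ x ≤ M) (hK : ∀ k, K < k → ∀ x ∈ annulus n k, φ x = 0)
    (hw : Measurable w) (h : HB n s q N w) :
    HB n (s + η) q (2 ^ |γ| * M ^ (α - 1) * 2 ^ ((K:ℝ) * (γ + η)) * N)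
      (fun x => ENNReal.ofReal (‖x‖ ^ γ) * (φ x ^ (α - 1) * w x)) := by
  have hq0 : 0 < q := by linarith
  have hα1 : 0 < α - 1 := by linarith
  intro k
  by_cases hk : K < k
  · have : ∫⁻ x in annulus n k, (ENNReal.ofReal (‖x‖ ^ γ) * (φ x ^ (α - 1) * w x)) ^ q = 0 := by
      rw [setLIntegral_congr_fun (g := fun _ => 0) (annulus_meas n k)]
      · simp
      · intro x hx
        simp [hK k hk x hx, hα1, hq0]
    rw [this]
    simp [hq0]
  · calc
      _ ≤ (∫⁻ x in annulus n k, (2 ^ |γ| * 2 ^ ((k:ℝ) * γ) * M ^ (α-1)) ^ q * w x ^ q) ^ (1/q) := by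
        apply ENNReal.rpow_le_rpow _ (by positivity)
        apply setLIntegral_mono' (annulus_meas n k)
        intro x hx
        rw [← ENNReal.mul_rpow_of_nonneg _ _ hq0.le]
        apply ENNReal.rpow_le_rpow _ hq0.le
        dsimp only
        rw [← mul_assoc]
        exact mul_le_mul' (mul_le_mul' (weight_le γ hx) (ENNReal.rpow_le_rpow (hM x) hα1.le)) le_rfl
      _ = 2 ^ |γ| * 2 ^ ((k:ℝ) * γ) * M ^ (α-1) * (∫⁻ x in annulus n k, w x ^ q) ^ (1/q) := by
        rw [lintegral_const_mul _ (hw.pow_const _), ENNReal.mul_rpow_of_nonneg _ _ (by positivity),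
          ← ENNReal.rpow_mul, mul_one_div_cancel hq0.ne', ENNReal.rpow_one]
      _ ≤ 2 ^ |γ| * 2 ^ ((k:ℝ) * γ) * M ^ (α-1) * (N * 2 ^ (-((k:ℝ) * s))) := by
        gcongr; exact h k
      _ = 2 ^ |γ| * M ^ (α-1) * N * (2 ^ ((k:ℝ) * γ) * 2 ^ (-((k:ℝ) * s))) := by ring
      _ ≤ 2 ^ |γ| * M ^ (α-1) * N * (2 ^ ((K:ℝ) * (γ + η)) * 2 ^ (-((k:ℝ) * (s + η)))) := by
        gcongr _ * ?_
        rw [two_rpow_add, two_rpow_add]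
        apply two_rpow_mono
        have : (k:ℝ) ≤ K := by exact_mod_cast not_lt.mp hk
        nlinarith
      _ = _ := by ring

lemma abs_pow_diff {α : ℝ} (hα : 1 < α) (a b : ℝ) :
    |(|a| ^ (α-1) * a - |b| ^ (α-1) * b)| ≤ α * (|a| ^ (α-1) + |b| ^ (α-1)) * |a - b| := by
  have key : ∀ a b : ℝ, |b| ≤ |a| →
      |(|a| ^ (α-1) * a - |b| ^ (α-1) * b)| ≤ α * |a| ^ (α-1) * |a - b| := by
    intro a b hab
    rcases eq_or_lt_of_le (abs_nonneg a) with h0 | h0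
    · have ha : a = 0 := abs_eq_zero.mp h0.symm
      have hb : b = 0 := by
        rw [← h0] at hab; exact abs_eq_zero.mp (le_antisymm hab (abs_nonneg b))
      simp [ha, hb]
    · have hpow : 0 ≤ |a| ^ (α-1) := by positivity
      have hmono : |b| ^ (α-1) ≤ |a| ^ (α-1) := Real.rpow_le_rpow (abs_nonneg _) hab (by linarith)
      have hd : |a| - |b| ≤ |a - b| := abs_sub_abs_le_abs_sub a b
      -- Bernoulli
      have hB := one_add_mul_self_le_rpow_one_add (s := |b| / |a| - 1)
        (by have : 0 ≤ |b| / |a| := by positivity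
            linarith) hα.le
      rw [add_sub_cancel, Real.div_rpow (abs_nonneg _) h0.le, le_div_iff₀ (by positivity)] at hB
      have ha' : |a| ^ α = |a| ^ (α-1) * |a| := by
        rw [← Real.rpow_add_one h0.ne']; simp
      have hb' : |b| ^ α = |b| ^ (α-1) * |b| := by
        rcases eq_or_lt_of_le (abs_nonneg b) with h1 | h1
        · rw [← h1]; rw [Real.zero_rpow (by linarith)]; simp
        · rw [← Real.rpow_add_one h1.ne']; simp
      have hB' : |a| ^ (α-1) * (|a| + α * (|b| - |a|)) ≤ |b| ^ (α-1) * |b| := by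
        rw [← hb']
        refine le_trans (le_of_eq ?_) hB
        rw [ha']; field_simp
      have e : |a| ^ (α-1) * a - |b| ^ (α-1) * b = |a| ^ (α-1) * (a - b) + (|a| ^ (α-1) - |b| ^ (α-1)) * b := by ring
      rw [e]
      calc _ ≤ |a| ^ (α-1) * |a - b| + (|a| ^ (α-1) - |b| ^ (α-1)) * |b| := by
            refine (abs_add_le _ _).trans ?_
            rw [abs_mul, abs_mul, abs_of_nonneg hpow, abs_of_nonneg (sub_nonneg.mpr hmono)]
        _ ≤ |a| ^ (α-1) * |a - b| + (α - 1) * |a| ^ (α-1) * (|a| - |b|) := by nlinarith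
        _ ≤ |a| ^ (α-1) * |a - b| + (α - 1) * |a| ^ (α-1) * |a - b| := by
            have : 0 ≤ (α - 1) * |a| ^ (α-1) := mul_nonneg (by linarith) hpow
            gcongr
        _ = _ := by ring
  have ha : 0 ≤ |a| ^ (α-1) := by positivity
  have hb : 0 ≤ |b| ^ (α-1) := by positivity
  rcases le_total |b| |a| with h | h
  · refine (key a b h).trans ?_
    gcongr; linarith
  · rw [abs_sub_comm, abs_sub_comm a b]
    refine (key b a h).trans ?_
    gcongr; linarith

lemma enorm_pow_le {α : ℝ} (hα : 1 < α) (a c : ℝ) :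
    ‖a‖ₑ ^ (α-1) ≤ 2 ^ (α-1) * (‖a - c‖ₑ ^ (α-1) + ‖c‖ₑ ^ (α-1)) := by
  have hα1 : 0 ≤ α - 1 := by linarith
  have h1 : ‖a‖ₑ ≤ ‖a - c‖ₑ + ‖c‖ₑ := by
    calc ‖a‖ₑ = ‖(a - c) + c‖ₑ := by simp
      _ ≤ _ := enorm_add_le _ _
  have h2 : ‖a‖ₑ ≤ 2 * max ‖a - c‖ₑ ‖c‖ₑ := by
    refine h1.trans ?_
    rw [two_mul]
    exact add_le_add (le_max_left _ _) (le_max_right _ _)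
  calc _ ≤ (2 * max ‖a - c‖ₑ ‖c‖ₑ) ^ (α-1) := ENNReal.rpow_le_rpow h2 hα1
    _ = 2 ^ (α-1) * (max ‖a - c‖ₑ ‖c‖ₑ) ^ (α-1) := ENNReal.mul_rpow_of_nonneg _ _ hα1
    _ ≤ _ := by
      gcongr
      rcases le_total ‖a - c‖ₑ ‖c‖ₑ with h | h
      · rw [max_eq_right h]; exact le_add_self
      · rw [max_eq_left h]; exact le_self_add

def nlC (α : ℝ) : ℝ≥0∞ := ENNReal.ofReal α * 2 ^ (α - 1) * 2

lemma nlC_ne_top (α : ℝ) : nlC α ≠ ⊤ :=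
  ENNReal.mul_ne_top (ENNReal.mul_ne_top ENNReal.ofReal_ne_top (two_rpow_ne_top _)) (by norm_num)

lemma nonlin_diff (n : ℕ) {γ α : ℝ} (hα : 1 < α) (u₁ u₂ φ : Euc n → ℝ) (x : Euc n) :
    ‖nonlin n γ α u₁ x - nonlin n γ α u₂ x‖ₑ ≤ nlC α * (
      ENNReal.ofReal (‖x‖ ^ γ) * (‖u₁ x - φ x‖ₑ ^ (α-1) * ‖u₁ x - u₂ x‖ₑ) +
      ENNReal.ofReal (‖x‖ ^ γ) * (‖u₂ x - φ x‖ₑ ^ (α-1) * ‖u₁ x - u₂ x‖ₑ) +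
      ENNReal.ofReal (‖x‖ ^ γ) * (‖φ x‖ₑ ^ (α-1) * ‖u₁ x - u₂ x‖ₑ)) := by
  have hα1 : 0 ≤ α - 1 := by linarith
  have hr : ∀ a : ℝ, ENNReal.ofReal (|a| ^ (α-1)) = ‖a‖ₑ ^ (α-1) := by
    intro a
    rw [← ENNReal.ofReal_rpow_of_nonneg (abs_nonneg _) hα1, Real.enorm_eq_ofReal_abs]
  have h0 : ‖nonlin n γ α u₁ x - nonlin n γ α u₂ x‖ₑ ≤ ENNReal.ofReal (‖x‖ ^ γ) *
      (ENNReal.ofReal α * (‖u₁ x‖ₑ ^ (α-1) + ‖u₂ x‖ₑ ^ (α-1)) * ‖u₁ x - u₂ x‖ₑ) := by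
    have : nonlin n γ α u₁ x - nonlin n γ α u₂ x = ‖x‖ ^ γ * (|u₁ x| ^ (α-1) * u₁ x - |u₂ x| ^ (α-1) * u₂ x) := by
      unfold nonlin; ring
    rw [this, enorm_mul, Real.enorm_eq_ofReal (by positivity : 0 ≤ ‖x‖ ^ γ), Real.enorm_eq_ofReal_abs (_ - _)]
    gcongr
    refine (ENNReal.ofReal_le_ofReal (abs_pow_diff hα _ _)).trans (le_of_eq ?_)
    rw [ENNReal.ofReal_mul (by positivity), ENNReal.ofReal_mul (by positivity), ENNReal.ofReal_add (by positivity) (by positivity),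
      hr, hr, Real.enorm_eq_ofReal_abs (u₁ x - u₂ x)]
  refine h0.trans ?_
  calc _ ≤ ENNReal.ofReal (‖x‖ ^ γ) *
      (ENNReal.ofReal α * (2 ^ (α-1) * (‖u₁ x - φ x‖ₑ ^ (α-1) + ‖φ x‖ₑ ^ (α-1)) + 2 ^ (α-1) * (‖u₂ x - φ x‖ₑ ^ (α-1) + ‖φ x‖ₑ ^ (α-1))) * ‖u₁ x - u₂ x‖ₑ) := by
        gcongr
        · exact enorm_pow_le hα _ _
        · exact enorm_pow_le hα _ _
    _ ≤ ENNReal.ofReal (‖x‖ ^ γ) *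
      (ENNReal.ofReal α * (2 ^ (α-1) * (2 * ‖u₁ x - φ x‖ₑ ^ (α-1) + ‖φ x‖ₑ ^ (α-1)) + 2 ^ (α-1) * (2 * ‖u₂ x - φ x‖ₑ ^ (α-1) + ‖φ x‖ₑ ^ (α-1))) * ‖u₁ x - u₂ x‖ₑ) := by
        have h2 : ∀ z : ℝ≥0∞, z ≤ 2 * z := fun z => le_mul_of_one_le_left (by simp) (by norm_num)
        gcongr
        · exact h2 _
        · exact h2 _
    _ = _ := by unfold nlC; ring

lemma duhamel_shift (n : ℕ) {s s' q q' θ : ℝ} (hq : 1 ≤ q) (hθ : 0 ≤ θ) {C : ℝ≥0∞}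
    (hC : ∀ (h : ℝ) (F : ℝ × Euc n → ℝ≥0∞), Measurable F → ∀ N : ℝ≥0∞,
      (∀ᵐ τ ∂(volume.restrict (Ioo 0 h)), HB n s' q' N (fun y => F (τ, y))) →
      HB n s q (C * (ENNReal.ofReal h) ^ θ * N)
        (fun x => ∫⁻ τ in Ioo 0 h, ∫⁻ y, hk n τ x y * F (τ, y)))
    {t₀ t h : ℝ} (ht : t ≤ t₀ + h) {F : ℝ × Euc n → ℝ≥0∞} (hF : Measurable F) (N : ℝ≥0∞)
    (hN : ∀ᵐ τ ∂(volume.restrict (Ioo t₀ (t₀ + h))), HB n s' q' N (fun y => F (τ, y))) :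
    HB n s q (C * (ENNReal.ofReal h) ^ θ * N)
        (fun x => ∫⁻ τ in Ioo t₀ t, ∫⁻ y, hk n (t - τ) x y * F (τ, y)) := by
  have hG : Measurable (fun z : ℝ × Euc n => F (t - z.1, z.2)) :=
    hF.comp ((measurable_const.sub measurable_fst).prodMk measurable_snd)
  have hN' : ∀ᵐ σ ∂(volume.restrict (Ioo 0 (t - t₀))), HB n s' q' N (fun y => F (t - σ, y)) := by
    rw [ae_restrict_iff' measurableSet_Ioo] at hN ⊢
    have := ((volume : Measure ℝ).measurePreserving_sub_left t).quasiMeasurePreserving.ae hN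
    filter_upwards [this] with σ h1 h2
    exact h1 ⟨by linarith [h2.2], by linarith [h2.1]⟩
  have := hC (t - t₀) _ hG N hN'
  refine this.mono hq ?_ (Eventually.of_forall fun x => le_of_eq ?_)
  · gcongr
    linarith
  · rw [← lintegral_indicator measurableSet_Ioo, ← lintegral_indicator measurableSet_Ioo,
      ← lintegral_sub_left_eq_self ((Ioo 0 (t - t₀)).indicator _) t]
    congr 1
    ext τ
    by_cases h : τ ∈ Ioo t₀ t
    · have h' : t - τ ∈ Ioo 0 (t - t₀) := ⟨by linarith [h.2], by linarith [h.1]⟩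
      rw [indicator_of_mem h, indicator_of_mem h']
      simp
    · rw [indicator_of_notMem h, indicator_of_notMem]
      intro h'
      exact h ⟨by linarith [h'.2], by linarith [h'.1]⟩

lemma conv_shift_meas (n : ℕ) (t : ℝ) {F : ℝ × Euc n → ℝ≥0∞} (hF : Measurable F) :
    Measurable (fun p : ℝ × Euc n => ∫⁻ y, hk n (t - p.1) p.2 y * F (p.1, y)) := by
  have hG : Measurable (fun z : ℝ × Euc n => F (t - z.1, z.2)) :=
    hF.comp ((measurable_const.sub measurable_fst).prodMk measurable_snd)
  have hs : Measurable (fun z : ℝ × Euc n => (t - z.1, z.2)) :=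
    (measurable_const.sub measurable_fst).prodMk measurable_snd
  have := (heatConv_meas n hG).comp hs
  have e : (fun p : ℝ × Euc n => ∫⁻ y, hk n (t - p.1) p.2 y * F (p.1, y)) =
      (fun p : ℝ × Euc n => ∫⁻ y, hk n p.1 p.2 y * F (t - (p.1, y).1, (p.1, y).2)) ∘ (fun z : ℝ × Euc n => (t - z.1, z.2)) := by
    ext p
    simp
  rw [e]
  exact this

def duh (n : ℕ) (t₀ t : ℝ) (F : ℝ × Euc n → ℝ≥0∞) (x : Euc n) : ℝ≥0∞ :=
  ∫⁻ τ in Ioo t₀ t, ∫⁻ y, hk n (t - τ) x y * F (τ, y)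

lemma duh_meas (n : ℕ) (t₀ t : ℝ) {F : ℝ × Euc n → ℝ≥0∞} (hF : Measurable F) :
    Measurable (duh n t₀ t F) :=
  Measurable.lintegral_prod_left' (f := fun p : ℝ × Euc n => ∫⁻ y, hk n (t - p.1) p.2 y * F (p.1, y))
    (conv_shift_meas n t hF)

lemma conv_meas_time (n : ℕ) (t : ℝ) {F : ℝ × Euc n → ℝ≥0∞} (hF : Measurable F) (x : Euc n) :
    Measurable (fun τ : ℝ => ∫⁻ y, hk n (t - τ) x y * F (τ, y)) :=
  Measurable.of_uncurry_right (f := fun (τ : ℝ) (x : Euc n) => ∫⁻ y, hk n (t - τ) x y * F (τ, y)) (y := x)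
    (conv_shift_meas n t hF)

lemma slice_meas {n : ℕ} {F : ℝ × Euc n → ℝ≥0∞} (hF : Measurable F) (τ : ℝ) :
    Measurable (fun y => F (τ, y)) :=
  hF.comp measurable_prodMk_left

lemma duh_add (n : ℕ) (t₀ t : ℝ) {F G : ℝ × Euc n → ℝ≥0∞} (hF : Measurable F) (hG : Measurable G) (x : Euc n) :
    duh n t₀ t (fun z => F z + G z) x = duh n t₀ t F x + duh n t₀ t G x := by
  unfold duh
  rw [← lintegral_add_left (conv_meas_time n t hF x)]
  congr 1
  ext τ
  have hm : Measurable (fun y => hk n (t - τ) x y * F (τ, y)) := (hk_meas_right n _ x).mul (slice_meas hF τ)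
  rw [← lintegral_add_left hm]
  congr 1
  ext y
  ring

lemma duh_const_mul (n : ℕ) (t₀ t : ℝ) {F : ℝ × Euc n → ℝ≥0∞} (hF : Measurable F) (c : ℝ≥0∞) (x : Euc n) :
    duh n t₀ t (fun z => c * F z) x = c * duh n t₀ t F x := by
  unfold duh
  rw [← lintegral_const_mul _ (conv_meas_time n t hF x)]
  congr 1
  ext τ
  have hm : Measurable (fun y => hk n (t - τ) x y * F (τ, y)) := (hk_meas_right n _ x).mul (slice_meas hF τ)
  rw [← lintegral_const_mul _ hm]
  congr 1
  ext y
  ring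

lemma duh_mono (n : ℕ) (t₀ t : ℝ) {F G : ℝ × Euc n → ℝ≥0∞} (h : ∀ z, F z ≤ G z) (x : Euc n) :
    duh n t₀ t F x ≤ duh n t₀ t G x := by
  unfold duh
  apply lintegral_mono
  intro τ
  apply lintegral_mono
  intro y
  exact mul_le_mul' le_rfl (h _)

lemma mild_diff (n : ℕ) {γ α T t₀ : ℝ} (ht₀ : 0 ≤ t₀) {u₀ : Euc n → ℝ} {u₁ u₂ : ℝ → Euc n → ℝ}
    (h₁ : IsMildSolution n γ α T u₀ u₁) (h₂ : IsMildSolution n γ α T u₀ u₂)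
    (he : ∀ τ ∈ Icc 0 t₀, u₁ τ =ᵐ[volume] u₂ τ) :
    ∀ᵐ t ∂(volume.restrict (Ioo t₀ T)), ∀ᵐ x, ‖u₁ t x - u₂ t x‖ₑ ≤
      duh n t₀ t (fun z => ‖nonlin n γ α (u₁ z.1) z.2 - nonlin n γ α (u₂ z.1) z.2‖ₑ) x := by
  have hsub : Ioo t₀ T ⊆ Ioo 0 T := Ioo_subset_Ioo_left ht₀
  have a1 := ae_restrict_of_ae_restrict_of_subset hsub (Measure.ae_ae_of_ae_prod h₁.2)
  have a2 := ae_restrict_of_ae_restrict_of_subset hsub (Measure.ae_ae_of_ae_prod h₂.2)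
  filter_upwards [a1, a2, ae_restrict_mem measurableSet_Ioo] with t b1 b2 ht
  filter_upwards [b1, b2] with x c1 c2
  obtain ⟨-, i1, e1⟩ := c1
  obtain ⟨-, i2, e2⟩ := c2
  have e3 : u₁ t x - u₂ t x = ∫ z : ℝ × Euc n, (heatKernel n (t - z.1) x z.2 * nonlin n γ α (u₁ z.1) z.2
      - heatKernel n (t - z.1) x z.2 * nonlin n γ α (u₂ z.1) z.2) ∂((volume.restrict (Ioo 0 t)).prod volume) := by
    rw [integral_sub i1 i2]
    rw [e1, e2]; ring
  rw [e3]
  refine (enorm_integral_le_lintegral_enorm _).trans ?_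
  have hae : AEMeasurable (fun z : ℝ × Euc n => ‖heatKernel n (t - z.1) x z.2 * nonlin n γ α (u₁ z.1) z.2
      - heatKernel n (t - z.1) x z.2 * nonlin n γ α (u₂ z.1) z.2‖ₑ) ((volume.restrict (Ioo 0 t)).prod volume) :=
    (i1.sub i2).1.enorm
  rw [lintegral_prod _ hae]
  have hs : Ioo 0 t ⊆ Icc 0 t₀ ∪ Ioo t₀ t := by
    intro τ hτ
    rcases le_or_gt τ t₀ with h | h
    · exact Or.inl ⟨hτ.1.le, h⟩
    · exact Or.inr ⟨h, hτ.2⟩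
  refine (lintegral_mono_set hs).trans ((lintegral_union_le _ _ _).trans ?_)
  have z0 : ∫⁻ τ in Icc 0 t₀, ∫⁻ y, ‖heatKernel n (t - τ) x y * nonlin n γ α (u₁ τ) y
      - heatKernel n (t - τ) x y * nonlin n γ α (u₂ τ) y‖ₑ = 0 := by
    rw [setLIntegral_congr_fun (g := fun _ => 0) measurableSet_Icc]
    · simp
    · intro τ hτ
      dsimp only
      rw [lintegral_congr_ae (g := fun _ => 0)]
      · simp
      · filter_upwards [he τ hτ] with y hy
        simp [nonlin, hy]
  refine (add_le_add_left (le_of_eq z0) _).trans ?_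
  rw [zero_add]
  unfold duh
  apply setLIntegral_mono' measurableSet_Ioo
  intro τ hτ
  apply lintegral_mono
  intro y
  dsimp only
  rw [← mul_sub, enorm_mul, Real.enorm_eq_ofReal (heatKernel_nonneg n (by linarith [hτ.2]) x y)]
  rfl

lemma contraction_step (n : ℕ) {s p α γ η θ : ℝ} (hα : 1 < α) (hp : α ≤ p) (hη : 0 ≤ γ + η) (hθ : 0 ≤ θ)
    {C₁ C₂ : ℝ≥0∞}
    (hC₁ : ∀ (h : ℝ) (F : ℝ × Euc n → ℝ≥0∞), Measurable F → ∀ N : ℝ≥0∞,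
      (∀ᵐ τ ∂(volume.restrict (Ioo 0 h)), HB n (α * s - γ) (p / α) N (fun y => F (τ, y))) →
      HB n s p (C₁ * (ENNReal.ofReal h) ^ (0:ℝ) * N)
        (fun x => ∫⁻ τ in Ioo 0 h, ∫⁻ y, hk n τ x y * F (τ, y)))
    (hC₂ : ∀ (h : ℝ) (F : ℝ × Euc n → ℝ≥0∞), Measurable F → ∀ N : ℝ≥0∞,
      (∀ᵐ τ ∂(volume.restrict (Ioo 0 h)), HB n (s + η) p N (fun y => F (τ, y))) →
      HB n s p (C₂ * (ENNReal.ofReal h) ^ θ * N)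
        (fun x => ∫⁻ τ in Ioo 0 h, ∫⁻ y, hk n τ x y * F (τ, y)))
    {t₀ h : ℝ} {u₁ u₂ : ℝ → Euc n → ℝ} (hu₁ : Measurable (Function.uncurry u₁))
    (hu₂ : Measurable (Function.uncurry u₂)) {φ : Euc n → ℝ} (hφ : Measurable φ)
    {M : ℝ≥0∞} {K : ℤ} (hM : ∀ x, ‖φ x‖ₑ ≤ M) (hK : ∀ k, K < k → ∀ x ∈ annulus n k, ‖φ x‖ₑ = 0)
    {E N : ℝ≥0∞}
    (hE₁ : ∀ᵐ τ ∂(volume.restrict (Ioo t₀ (t₀ + h))), HB n s p E (fun y => ‖u₁ τ y - φ y‖ₑ))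
    (hE₂ : ∀ᵐ τ ∂(volume.restrict (Ioo t₀ (t₀ + h))), HB n s p E (fun y => ‖u₂ τ y - φ y‖ₑ))
    (hN : ∀ᵐ τ ∂(volume.restrict (Ioo t₀ (t₀ + h))), HB n s p N (fun y => ‖u₁ τ y - u₂ τ y‖ₑ))
    (hmild : ∀ᵐ t ∂(volume.restrict (Ioo t₀ (t₀ + h))), ∀ᵐ x, ‖u₁ t x - u₂ t x‖ₑ ≤
      duh n t₀ t (fun z => ‖nonlin n γ α (u₁ z.1) z.2 - nonlin n γ α (u₂ z.1) z.2‖ₑ) x) :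
    ∀ᵐ t ∂(volume.restrict (Ioo t₀ (t₀ + h))),
      HB n s p (nlC α * (C₁ * (2 ^ |γ| * E ^ (α - 1) * N) + C₁ * (2 ^ |γ| * E ^ (α - 1) * N) +
        C₂ * (ENNReal.ofReal h) ^ θ * (2 ^ |γ| * M ^ (α - 1) * 2 ^ ((K:ℝ) * (γ + η)) * N)))
        (fun y => ‖u₁ t y - u₂ t y‖ₑ) := by
  have hp1 : 1 ≤ p := by linarith
  have mw : Measurable (fun z : ℝ × Euc n => ENNReal.ofReal (‖z.2‖ ^ γ)) := (weight_meas n γ).comp measurable_snd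
  have mu₁ : Measurable (fun z : ℝ × Euc n => u₁ z.1 z.2) := hu₁
  have mu₂ : Measurable (fun z : ℝ × Euc n => u₂ z.1 z.2) := hu₂
  have mφ : Measurable (fun z : ℝ × Euc n => φ z.2) := hφ.comp measurable_snd
  have md : Measurable (fun z : ℝ × Euc n => ‖u₁ z.1 z.2 - u₂ z.1 z.2‖ₑ) := (mu₁.sub mu₂).enorm
  have sl : ∀ {f : ℝ × Euc n → ℝ≥0∞}, Measurable f → ∀ τ, Measurable (fun y => f (τ, y)) := fun h τ => slice_meas h τ
  have m1 : Measurable (fun z : ℝ × Euc n => ‖u₁ z.1 z.2 - φ z.2‖ₑ) := (mu₁.sub mφ).enorm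
  have m2 : Measurable (fun z : ℝ × Euc n => ‖u₂ z.1 z.2 - φ z.2‖ₑ) := (mu₂.sub mφ).enorm
  have m3 : Measurable (fun z : ℝ × Euc n => ‖φ z.2‖ₑ) := mφ.enorm
  obtain ⟨F₁, hF₁⟩ : ∃ F : ℝ × Euc n → ℝ≥0∞, F = fun z => ENNReal.ofReal (‖z.2‖ ^ γ) *
    (‖u₁ z.1 z.2 - φ z.2‖ₑ ^ (α-1) * ‖u₁ z.1 z.2 - u₂ z.1 z.2‖ₑ) := ⟨_, rfl⟩
  obtain ⟨F₂, hF₂⟩ : ∃ F : ℝ × Euc n → ℝ≥0∞, F = fun z => ENNReal.ofReal (‖z.2‖ ^ γ) *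
    (‖u₂ z.1 z.2 - φ z.2‖ₑ ^ (α-1) * ‖u₁ z.1 z.2 - u₂ z.1 z.2‖ₑ) := ⟨_, rfl⟩
  obtain ⟨F₃, hF₃⟩ : ∃ F : ℝ × Euc n → ℝ≥0∞, F = fun z => ENNReal.ofReal (‖z.2‖ ^ γ) *
    (‖φ z.2‖ₑ ^ (α-1) * ‖u₁ z.1 z.2 - u₂ z.1 z.2‖ₑ) := ⟨_, rfl⟩
  have mF₁ : Measurable F₁ := by rw [hF₁]; exact mw.mul ((m1.pow_const _).mul md)
  have mF₂ : Measurable F₂ := by rw [hF₂]; exact mw.mul ((m2.pow_const _).mul md)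
  have mF₃ : Measurable F₃ := by rw [hF₃]; exact mw.mul ((m3.pow_const _).mul md)
  have b1 : ∀ᵐ τ ∂(volume.restrict (Ioo t₀ (t₀ + h))),
      HB n (α * s - γ) (p / α) (2 ^ |γ| * E ^ (α - 1) * N) (fun y => F₁ (τ, y)) := by
    filter_upwards [hE₁, hN] with τ x1 x2
    rw [hF₁]
    exact HB.nonlin hα hp (sl m1 τ) (sl md τ) x1 x2
  have b2 : ∀ᵐ τ ∂(volume.restrict (Ioo t₀ (t₀ + h))),
      HB n (α * s - γ) (p / α) (2 ^ |γ| * E ^ (α - 1) * N) (fun y => F₂ (τ, y)) := by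
    filter_upwards [hE₂, hN] with τ x1 x2
    rw [hF₂]
    exact HB.nonlin hα hp (sl m2 τ) (sl md τ) x1 x2
  have b3 : ∀ᵐ τ ∂(volume.restrict (Ioo t₀ (t₀ + h))),
      HB n (s + η) p (2 ^ |γ| * M ^ (α - 1) * 2 ^ ((K:ℝ) * (γ + η)) * N) (fun y => F₃ (τ, y)) := by
    filter_upwards [hN] with τ x2
    rw [hF₃]
    exact HB.phi hα hp1 hη K hM hK (sl md τ) x2
  filter_upwards [hmild, ae_restrict_mem measurableSet_Ioo] with t hx ht
  have d1 := duhamel_shift n hp1 le_rfl hC₁ ht.2.le mF₁ _ b1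
  have d2 := duhamel_shift n hp1 le_rfl hC₁ ht.2.le mF₂ _ b2
  have d3 := duhamel_shift n hp1 hθ hC₂ ht.2.le mF₃ _ b3
  rw [ENNReal.rpow_zero, mul_one] at d1 d2
  have d := (((HB.add (g := duh n t₀ t F₁) (g' := duh n t₀ t F₂) d1 d2 hp1 (duh_meas n t₀ t mF₁)
    (duh_meas n t₀ t mF₂)).add (g' := duh n t₀ t F₃) d3 hp1
    ((duh_meas n t₀ t mF₁).add (duh_meas n t₀ t mF₂)) (duh_meas n t₀ t mF₃))).const_mul hp1
    (((duh_meas n t₀ t mF₁).add (duh_meas n t₀ t mF₂)).add (duh_meas n t₀ t mF₃)) (nlC α)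
  refine d.mono hp1 le_rfl ?_
  filter_upwards [hx] with x hx'
  refine hx'.trans ?_
  have m12 : Measurable (fun z => F₁ z + F₂ z) := mF₁.add mF₂
  have m123 : Measurable (fun z => F₁ z + F₂ z + F₃ z) := m12.add mF₃
  rw [← duh_add n t₀ t mF₁ mF₂, ← duh_add n t₀ t m12 mF₃, ← duh_const_mul n t₀ t m123]
  apply duh_mono
  intro z
  rw [hF₁, hF₂, hF₃]
  exact nonlin_diff n hα (u₁ z.1) (u₂ z.1) φ z.2

lemma HB_zero_of_tendsto {n : ℕ} {s q : ℝ} {g : Euc n → ℝ≥0∞} {N : ℕ → ℝ≥0∞}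
    (hN : Tendsto N atTop (nhds 0)) (h : ∀ m, HB n s q (N m) g) : HB n s q 0 g := by
  intro k
  have h1 : Tendsto (fun m => N m * 2 ^ (-((k:ℝ) * s))) atTop (nhds (0 * 2 ^ (-((k:ℝ) * s)))) :=
    ENNReal.Tendsto.mul_const hN (Or.inr (two_rpow_ne_top _))
  exact ge_of_tendsto' h1 (fun m => h m k)

lemma exists_small {A : ℝ≥0∞} (hA : A ≠ ⊤) {β : ℝ} (hβ : 0 < β) :
    ∃ ε : ℝ, 0 < ε ∧ A * ENNReal.ofReal ε ^ β ≤ 4⁻¹ := by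
  obtain ⟨a, ha⟩ : ∃ a, a = A.toReal := ⟨_, rfl⟩
  have ha0 : 0 ≤ a := by rw [ha]; exact ENNReal.toReal_nonneg
  have hA' : A = ENNReal.ofReal a := by rw [ha, ENNReal.ofReal_toReal hA]
  refine ⟨(1 / (4 * (a + 1))) ^ (1 / β), by positivity, ?_⟩
  rw [ENNReal.ofReal_rpow_of_nonneg (by positivity) hβ.le, ← Real.rpow_mul (by positivity),
    one_div_mul_cancel hβ.ne', Real.rpow_one, hA', ← ENNReal.ofReal_mul ha0]
  have : (4:ℝ≥0∞)⁻¹ = ENNReal.ofReal (4⁻¹) := by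
    rw [ENNReal.ofReal_inv_of_pos (by norm_num)]; simp
  rw [this]
  apply ENNReal.ofReal_le_ofReal
  rw [mul_one_div, div_le_iff₀ (by positivity)]
  linarith

lemma eq_of_near {n : ℕ} (hn : 3 ≤ n) {s p T : ℝ} (hp : 1 ≤ p) {u₁ u₂ : ℝ → Euc n → ℝ}
    (hu₁ : Measurable (Function.uncurry u₁)) (hu₂ : Measurable (Function.uncurry u₂))
    (hc₁ : HerzContinuousOn n s (ENNReal.ofReal p) ⊤ u₁ (Icc 0 T))
    (hc₂ : HerzContinuousOn n s (ENNReal.ofReal p) ⊤ u₂ (Icc 0 T))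
    {t : ℝ} (ht : t ∈ Icc 0 T)
    (hnear : ∀ δ > 0, ∃ t' ∈ Icc 0 T, |t' - t| < δ ∧ u₁ t' =ᵐ[volume] u₂ t') :
    u₁ t =ᵐ[volume] u₂ t := by
  have s1 : ∀ τ, Measurable (u₁ τ) := fun τ => hu₁.comp measurable_prodMk_left
  have s2 : ∀ τ, Measurable (u₂ τ) := fun τ => hu₂.comp measurable_prodMk_left
  have hN : Tendsto (fun m : ℕ => ENNReal.ofReal (1 / ((m:ℝ) + 1)) + ENNReal.ofReal (1 / ((m:ℝ) + 1))) atTop (nhds 0) := by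
    have h0 := ENNReal.tendsto_ofReal (tendsto_one_div_add_atTop_nhds_zero_nat (𝕜 := ℝ))
    simpa using h0.add h0
  have hz : HB n s p 0 (fun x => ‖u₁ t x - u₂ t x‖ₑ) := by
    refine HB_zero_of_tendsto hN fun m => ?_
    have hε : (0:ℝ) < 1 / ((m:ℝ) + 1) := by positivity
    obtain ⟨δ₁, hδ₁, k1⟩ := hc₁ t ht _ hε
    obtain ⟨δ₂, hδ₂, k2⟩ := hc₂ t ht _ hε
    obtain ⟨t', ht', hd, he⟩ := hnear (min δ₁ δ₂) (lt_min hδ₁ hδ₂)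
    have b1 := herz_HB hp (k1 t' ht' (hd.trans_le (min_le_left _ _))).le
    have b2 := herz_HB hp (k2 t' ht' (hd.trans_le (min_le_right _ _))).le
    refine (b1.add b2 hp ((s1 t').sub (s1 t)).enorm ((s2 t').sub (s2 t)).enorm).mono hp le_rfl ?_
    filter_upwards [he] with x hx
    have e : u₁ t x - u₂ t x = -(u₁ t' x - u₁ t x) + (u₂ t' x - u₂ t x) := by rw [hx]; ring
    rw [e]
    refine (enorm_add_le _ _).trans ?_
    rw [enorm_neg]
  filter_upwards [hz.ae_zero hn hp ((s1 t).sub (s2 t)).enorm] with x hx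
  have hx' : ‖u₁ t x - u₂ t x‖ₑ = 0 := hx
  exact sub_eq_zero.mp (enorm_eq_zero.mp hx')

lemma annulus_far {n : ℕ} {φ : Euc n → ℝ} (hφ : HasCompactSupport φ) :
    ∃ K : ℤ, ∀ k, K < k → ∀ x ∈ annulus n k, ‖φ x‖ₑ = 0 := by
  obtain ⟨R, hR⟩ := hφ.isCompact.isBounded.subset_closedBall (0 : Euc n)
  obtain ⟨m, hm⟩ := pow_unbounded_of_one_lt R (by norm_num : (1:ℝ) < 2)
  refine ⟨m, fun k hk x hx => ?_⟩
  rw [enorm_eq_zero]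
  by_contra h
  have h1 := hR (subset_tsupport φ h)
  rw [mem_closedBall_zero_iff] at h1
  have h2 : (2:ℝ) ^ (m:ℤ) ≤ 2 ^ (k - 1) := zpow_le_zpow_right₀ (by norm_num) (by omega)
  rw [zpow_natCast] at h2
  linarith [hx.1]

lemma local_step (n : ℕ) (hn : 3 ≤ n) {s p α γ η θ T : ℝ} (hα : 1 < α) (hp : α ≤ p) (hη : 0 ≤ γ + η) (hθ : 0 < θ)
    {C₁ C₂ : ℝ≥0∞} (hC₁t : C₁ ≠ ⊤) (hC₂t : C₂ ≠ ⊤)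
    (hC₁ : ∀ (h : ℝ) (F : ℝ × Euc n → ℝ≥0∞), Measurable F → ∀ N : ℝ≥0∞,
      (∀ᵐ τ ∂(volume.restrict (Ioo 0 h)), HB n (α * s - γ) (p / α) N (fun y => F (τ, y))) →
      HB n s p (C₁ * (ENNReal.ofReal h) ^ (0:ℝ) * N)
        (fun x => ∫⁻ τ in Ioo 0 h, ∫⁻ y, hk n τ x y * F (τ, y)))
    (hC₂ : ∀ (h : ℝ) (F : ℝ × Euc n → ℝ≥0∞), Measurable F → ∀ N : ℝ≥0∞,
      (∀ᵐ τ ∂(volume.restrict (Ioo 0 h)), HB n (s + η) p N (fun y => F (τ, y))) →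
      HB n s p (C₂ * (ENNReal.ofReal h) ^ θ * N)
        (fun x => ∫⁻ τ in Ioo 0 h, ∫⁻ y, hk n τ x y * F (τ, y)))
    {u₀ : Euc n → ℝ} {u₁ u₂ : ℝ → Euc n → ℝ}
    (h₁ : IsMildSolution n γ α T u₀ u₁) (h₂ : IsMildSolution n γ α T u₀ u₂)
    (hc₁ : HerzContinuousOn n s (ENNReal.ofReal p) ⊤ u₁ (Icc 0 T))
    (hc₂ : HerzContinuousOn n s (ENNReal.ofReal p) ⊤ u₂ (Icc 0 T))
    (hm₁ : ∀ t ∈ Icc (0 : ℝ) T, MemHerzClosure n s (ENNReal.ofReal p) ⊤ (u₁ t))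
    {t₀ : ℝ} (ht₀ : t₀ ∈ Ico 0 T) (he : ∀ τ ∈ Icc 0 t₀, u₁ τ =ᵐ[volume] u₂ τ) :
    ∃ h > 0, ∀ t ∈ Icc t₀ (t₀ + h), t ≤ T → u₁ t =ᵐ[volume] u₂ t := by
  have hp1 : 1 ≤ p := by linarith
  have hα1 : 0 < α - 1 := by linarith
  have hu₁ := h₁.1
  have hu₂ := h₂.1
  have s1 : ∀ τ, Measurable (u₁ τ) := fun τ => hu₁.comp measurable_prodMk_left
  have s2 : ∀ τ, Measurable (u₂ τ) := fun τ => hu₂.comp measurable_prodMk_left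
  have ht₀' : t₀ ∈ Icc 0 T := ⟨ht₀.1, ht₀.2.le⟩
  have h2γ := two_rpow_ne_top |γ|
  obtain ⟨ε, hε, hεs⟩ := exists_small (A := nlC α * 2 * C₁ * 2 ^ |γ|)
    (ENNReal.mul_ne_top (ENNReal.mul_ne_top (ENNReal.mul_ne_top (nlC_ne_top α) (by norm_num)) hC₁t) h2γ) hα1
  obtain ⟨φ, hφc, hφs, hφ⟩ := (hm₁ t₀ ht₀').2 (ε / 2) (by positivity)
  have hφcont : Continuous φ := hφc.continuous
  have hφm : Measurable φ := hφcont.measurable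
  obtain ⟨K, hK⟩ := annulus_far hφs
  obtain ⟨M', hM'⟩ := hφcont.bounded_above_of_compact_support hφs
  obtain ⟨M, hMd⟩ : ∃ M, M = ENNReal.ofReal M' := ⟨_, rfl⟩
  have hMt : M ≠ ⊤ := by rw [hMd]; exact ENNReal.ofReal_ne_top
  have hM : ∀ x, ‖φ x‖ₑ ≤ M := by
    intro x
    rw [hMd, ← ofReal_norm_eq_enorm]
    exact ENNReal.ofReal_le_ofReal (hM' x)
  obtain ⟨P, hP⟩ : ∃ P : ℝ≥0∞, P = 2 ^ |γ| * M ^ (α - 1) * 2 ^ ((K:ℝ) * (γ + η)) := ⟨_, rfl⟩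
  have hPt : P ≠ ⊤ := by
    rw [hP]
    exact ENNReal.mul_ne_top (ENNReal.mul_ne_top h2γ (ENNReal.rpow_ne_top_of_nonneg hα1.le hMt)) (two_rpow_ne_top _)
  obtain ⟨h₀, hh₀, hh₀s⟩ := exists_small (A := nlC α * C₂ * P)
    (ENNReal.mul_ne_top (ENNReal.mul_ne_top (nlC_ne_top α) hC₂t) hPt) hθ
  obtain ⟨δ₁, hδ₁, k1⟩ := hc₁ t₀ ht₀' (ε / 2) (by positivity)
  obtain ⟨δ₂, hδ₂, k2⟩ := hc₂ t₀ ht₀' (ε / 2) (by positivity)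
  obtain ⟨h, hhd⟩ : ∃ h, h = min (min h₀ (T - t₀)) (min δ₁ δ₂) := ⟨_, rfl⟩
  have hh : 0 < h := by
    rw [hhd]
    exact lt_min (lt_min hh₀ (by linarith [ht₀.2])) (lt_min hδ₁ hδ₂)
  have hle0 : h ≤ h₀ := by rw [hhd]; exact (min_le_left _ _).trans (min_le_left _ _)
  have hleT : h ≤ T - t₀ := by rw [hhd]; exact (min_le_left _ _).trans (min_le_right _ _)
  have hle1 : h ≤ δ₁ := by rw [hhd]; exact (min_le_right _ _).trans (min_le_left _ _)
  have hle2 : h ≤ δ₂ := by rw [hhd]; exact (min_le_right _ _).trans (min_le_right _ _)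
  obtain ⟨E, hE⟩ : ∃ E, E = ENNReal.ofReal ε := ⟨_, rfl⟩
  have hEE : ENNReal.ofReal (ε / 2) + ENNReal.ofReal (ε / 2) = E := by
    rw [← ENNReal.ofReal_add (by positivity) (by positivity), add_halves, hE]
  have bφ := herz_HB hp1 hφ.le
  have inI : ∀ τ ∈ Ioo t₀ (t₀ + h), τ ∈ Icc 0 T := fun τ hτ =>
    ⟨by linarith [hτ.1, ht₀.1], by linarith [hτ.2]⟩
  have inD : ∀ τ ∈ Ioo t₀ (t₀ + h), |τ - t₀| < h := fun τ hτ => by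
    rw [abs_of_pos (by linarith [hτ.1])]; linarith [hτ.2]
  have hE₁ : ∀ τ ∈ Ioo t₀ (t₀ + h), HB n s p E (fun y => ‖u₁ τ y - φ y‖ₑ) := by
    intro τ hτ
    have b := herz_HB hp1 (k1 τ (inI τ hτ) ((inD τ hτ).trans_le hle1)).le
    refine (b.add bφ hp1 ((s1 τ).sub (s1 t₀)).enorm ((s1 t₀).sub hφm).enorm).mono hp1 hEE.le ?_
    filter_upwards with x
    have e : u₁ τ x - φ x = (u₁ τ x - u₁ t₀ x) + (u₁ t₀ x - φ x) := by ring
    rw [e]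
    exact enorm_add_le _ _
  have hE₂ : ∀ τ ∈ Ioo t₀ (t₀ + h), HB n s p E (fun y => ‖u₂ τ y - φ y‖ₑ) := by
    intro τ hτ
    have b := herz_HB hp1 (k2 τ (inI τ hτ) ((inD τ hτ).trans_le hle2)).le
    refine (b.add bφ hp1 ((s2 τ).sub (s2 t₀)).enorm ((s1 t₀).sub hφm).enorm).mono hp1 hEE.le ?_
    filter_upwards [he t₀ ⟨ht₀.1, le_rfl⟩] with x hx
    have e : u₂ τ x - φ x = (u₂ τ x - u₂ t₀ x) + (u₁ t₀ x - φ x) := by rw [hx]; ring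
    rw [e]
    exact enorm_add_le _ _
  have aE₁ : ∀ᵐ τ ∂(volume.restrict (Ioo t₀ (t₀ + h))), HB n s p E (fun y => ‖u₁ τ y - φ y‖ₑ) := by
    filter_upwards [ae_restrict_mem measurableSet_Ioo] with τ hτ using hE₁ τ hτ
  have aE₂ : ∀ᵐ τ ∂(volume.restrict (Ioo t₀ (t₀ + h))), HB n s p E (fun y => ‖u₂ τ y - φ y‖ₑ) := by
    filter_upwards [ae_restrict_mem measurableSet_Ioo] with τ hτ using hE₂ τ hτ
  have hmild := ae_restrict_of_ae_restrict_of_subset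
    (Ioo_subset_Ioo_right (by linarith : t₀ + h ≤ T)) (mild_diff n ht₀.1 h₁ h₂ he)
  have iter : ∀ m : ℕ, ∀ᵐ τ ∂(volume.restrict (Ioo t₀ (t₀ + h))),
      HB n s p ((2⁻¹) ^ m * (E + E)) (fun y => ‖u₁ τ y - u₂ τ y‖ₑ) := by
    intro m
    induction m with
    | zero =>
      filter_upwards [aE₁, aE₂] with τ x1 x2
      refine (x1.add x2 hp1 ((s1 τ).sub hφm).enorm ((s2 τ).sub hφm).enorm).mono hp1 (by simp) ?_
      filter_upwards with x
      have e : u₁ τ x - u₂ τ x = (u₁ τ x - φ x) + -(u₂ τ x - φ x) := by ring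
      rw [e]
      refine (enorm_add_le _ _).trans ?_
      rw [enorm_neg]
    | succ m ih =>
      have := contraction_step n hα hp hη hθ.le hC₁ hC₂ hu₁ hu₂ hφm hM hK aE₁ aE₂ ih hmild
      filter_upwards [this] with τ hτ
      refine hτ.mono hp1 ?_ (Eventually.of_forall fun x => le_rfl)
      rw [← hP]
      obtain ⟨N, hN⟩ : ∃ N : ℝ≥0∞, N = (2⁻¹) ^ m * (E + E) := ⟨_, rfl⟩
      rw [← hN]
      calc nlC α * (C₁ * (2 ^ |γ| * E ^ (α - 1) * N) + C₁ * (2 ^ |γ| * E ^ (α - 1) * N) +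
          C₂ * ENNReal.ofReal h ^ θ * (P * N))
          = (nlC α * 2 * C₁ * 2 ^ |γ| * E ^ (α - 1) + nlC α * C₂ * P * ENNReal.ofReal h ^ θ) * N := by ring
        _ ≤ (4⁻¹ + 4⁻¹) * N := by
          gcongr
          · rw [hE]; exact hεs
          · refine le_trans ?_ hh₀s
            gcongr
        _ = 2⁻¹ * N := by
          congr 1
          rw [← two_mul, show (4:ℝ≥0∞) = 2 * 2 by norm_num, ENNReal.mul_inv (by simp) (by simp), ← mul_assoc,
            ENNReal.mul_inv_cancel (by simp) (by simp), one_mul]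
        _ = _ := by rw [hN]; ring
  have hlim : Tendsto (fun m : ℕ => (2⁻¹:ℝ≥0∞) ^ m * (E + E)) atTop (nhds 0) := by
    have h0 := ENNReal.tendsto_pow_atTop_nhds_zero_of_lt_one (r := 2⁻¹) (by simp)
    have hEt : E + E ≠ ⊤ := by rw [hE]; simp
    simpa using ENNReal.Tendsto.mul_const h0 (Or.inr hEt)
  have hae : ∀ᵐ τ ∂(volume.restrict (Ioo t₀ (t₀ + h))), u₁ τ =ᵐ[volume] u₂ τ := by
    filter_upwards [ae_all_iff.mpr iter] with τ hτ
    have hz := HB_zero_of_tendsto hlim hτ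
    filter_upwards [hz.ae_zero hn hp1 ((s1 τ).sub (s2 τ)).enorm] with x hx
    have hx' : ‖u₁ τ x - u₂ τ x‖ₑ = 0 := hx
    exact sub_eq_zero.mp (enorm_eq_zero.mp hx')
  refine ⟨h, hh, fun t ht htT => ?_⟩
  refine eq_of_near hn hp1 hu₁ hu₂ hc₁ hc₂ ⟨by linarith [ht.1, ht₀.1], htT⟩ fun δ hδ => ?_
  obtain ⟨a, ha⟩ : ∃ a, a = max t₀ (t - δ) := ⟨_, rfl⟩
  obtain ⟨b, hb⟩ : ∃ b, b = min (t₀ + h) (t + δ) := ⟨_, rfl⟩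
  have hab : a < b := by
    rw [ha, hb]
    exact max_lt (lt_min (by linarith) (by linarith [ht.1])) (lt_min (by linarith [ht.2]) (by linarith))
  have hsub : Ioo a b ⊆ Ioo t₀ (t₀ + h) :=
    Ioo_subset_Ioo (by rw [ha]; exact le_max_left _ _) (by rw [hb]; exact min_le_left _ _)
  have hae' := ae_restrict_of_ae_restrict_of_subset hsub hae
  have hne : NeBot (ae (volume.restrict (Ioo a b))) := by
    rw [ae_neBot, Ne, Measure.restrict_eq_zero]
    simp [hab]
  obtain ⟨t', h1, h2⟩ := (hae'.and (ae_restrict_mem measurableSet_Ioo)).exists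
  refine ⟨t', inI t' (hsub h2), ?_, h1⟩
  have ha' : t - δ ≤ a := by rw [ha]; exact le_max_right _ _
  have hb' : b ≤ t + δ := by rw [hb]; exact min_le_right _ _
  rw [abs_lt]
  exact ⟨by linarith [h2.1], by linarith [h2.2]⟩

/-- Unconditional uniqueness for the Hardy–Hénon equation in the scale-critical case
`s/n + 1/q = 1/q_c < 1/Q_c`, `q < ∞`, `r = ∞`, for continuous-in-time solutions with
values in the closure `𝒦̇^s_{q,∞}` of `C_c^∞` in the Herz space. -/
theorem uniqueness_scale_critical
    (n : ℕ) (hn : 3 ≤ n) (γ α s T : ℝ) (q : ℝ≥0∞)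
    (hγ : -(min 2 (n : ℝ)) < γ) (hα : 1 < α)
    (hα' : max 1 (1 + γ / (n : ℝ)) ≤ α)
    (hs1 : γ / (α - 1) < s) (hs2 : s ≤ (n : ℝ))
    (hq : ENNReal.ofReal α ≤ q) (hq' : q < ⊤)
    (hpos : 0 < s / (n : ℝ) + (q⁻¹).toReal)
    (hwd2 : s / (n : ℝ) + (q⁻¹).toReal < 1 ∨
      (s / (n : ℝ) + (q⁻¹).toReal = 1 ∧ (⊤ : ℝ≥0∞) ≤ 1))
    (hcrit : s / (n : ℝ) + (q⁻¹).toReal = (2 + γ) / ((n : ℝ) * (α - 1)))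
    (hlt : (2 + γ) / ((n : ℝ) * (α - 1)) < ((n : ℝ) + γ) / ((n : ℝ) * α))
    (hT : 0 < T) (u₀ : Euc n → ℝ) (hu₀ : MemHerzClosure n s q ⊤ u₀)
    (u₁ u₂ : ℝ → Euc n → ℝ)
    (h₁ : IsMildSolution n γ α T u₀ u₁) (h₂ : IsMildSolution n γ α T u₀ u₂)
    (hi₁ : u₁ 0 = u₀) (hi₂ : u₂ 0 = u₀)
    (hm₁ : ∀ t ∈ Set.Icc (0 : ℝ) T, MemHerzClosure n s q ⊤ (u₁ t))
    (hm₂ : ∀ t ∈ Set.Icc (0 : ℝ) T, MemHerzClosure n s q ⊤ (u₂ t))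
    (hc₁ : HerzContinuousOn n s q ⊤ u₁ (Set.Icc 0 T))
    (hc₂ : HerzContinuousOn n s q ⊤ u₂ (Set.Icc 0 T)) :
    ∀ t ∈ Set.Icc (0 : ℝ) T, u₁ t =ᵐ[volume] u₂ t := by
  obtain ⟨p, hp⟩ : ∃ p, p = q.toReal := ⟨_, rfl⟩
  have hqp : q = ENNReal.ofReal p := by rw [hp, ENNReal.ofReal_toReal hq'.ne]
  have hαp : α ≤ p := by
    rw [hp]
    exact (ENNReal.ofReal_le_iff_le_toReal hq'.ne).mp hq
  have hqi : (q⁻¹).toReal = 1 / p := by rw [ENNReal.toReal_inv, ← hp, one_div]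
  have hp0 : 0 < p := by linarith
  have hα0 : 0 < α := by linarith
  have hα1 : 0 < α - 1 := by linarith
  have hn0 : (0:ℝ) < n := by
    have : (3:ℝ) ≤ n := by exact_mod_cast hn
    linarith
  have hn3 : (3:ℝ) ≤ n := by exact_mod_cast hn
  have hγ2 : -2 < γ := by
    have := min_le_left 2 (n:ℝ)
    linarith
  rw [hqi] at hpos hwd2 hcrit
  subst hqp
  obtain ⟨S, hS⟩ : ∃ S, S = s + n / p := ⟨_, rfl⟩
  have hSn : s / n + 1 / p = S / n := by rw [hS]; field_simp
  rw [hSn] at hpos hwd2 hcrit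
  have hS0 : 0 < S := by
    by_contra h
    exact absurd hpos (not_lt.mpr (div_nonpos_of_nonpos_of_nonneg (not_lt.mp h) hn0.le))
  have hcr : S * (α - 1) = 2 + γ := by
    rw [div_eq_div_iff hn0.ne' (by positivity)] at hcrit
    have : n * (S * (α - 1)) = n * (2 + γ) := by linarith
    exact mul_left_cancel₀ hn0.ne' this
  have hSα : S * α < n + γ := by
    rw [← hcrit, div_lt_div_iff₀ hn0 (by positivity)] at hlt
    have : n * (S * α) < n * (n + γ) := by linarith
    exact lt_of_mul_lt_mul_left this hn0.le
  have hSlt : S < n := by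
    rcases hwd2 with h | h
    · rwa [div_lt_one hn0] at h
    · exact absurd h.2 (by simp)
  have hsγ : γ < s * (α - 1) := by rwa [div_lt_iff₀ hα1] at hs1
  have hnp : (n:ℝ) / (p / α) = n / p * α := by field_simp
  obtain ⟨C₁, hC₁t, hC₁⟩ := duhamel_bound n hn (s := s) (s' := α * s - γ) (q := p) (q' := p / α) (θ := 0)
    (by rw [le_div_iff₀ hα0]; linarith) (by rw [div_le_iff₀ hα0]; nlinarith) (by linarith)
    (by rw [hnp]; rw [hS] at hSα; linarith) (by rw [← hS]; exact hS0) le_rfl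
    (by rw [hnp]; rw [hS] at hcr; linarith)
  -- the auxiliary smoothing exponent
  have hex : ∃ η : ℝ, 0 < η ∧ -γ ≤ η ∧ η < 2 ∧ η < n - S := by
    have h2 : max 0 (-γ) < min 2 (n - S) := by
      refine max_lt (lt_min (by norm_num) (by linarith)) (lt_min (by linarith) ?_)
      have : S * α = S + (2 + γ) := by rw [← hcr]; ring
      linarith
    obtain ⟨η, e1, e2⟩ := exists_between h2
    exact ⟨η, (le_max_left _ _).trans_lt e1, ((le_max_right _ _).trans_lt e1).le,
      e2.trans_le (min_le_left _ _), e2.trans_le (min_le_right _ _)⟩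
  obtain ⟨η, η0, ηγ, η2, ηn⟩ := hex
  obtain ⟨C₂, hC₂t, hC₂⟩ := duhamel_bound n hn (s := s) (s' := s + η) (q := p) (q' := p) (θ := 1 - η / 2)
    (by linarith) le_rfl (by linarith) (by rw [hS] at ηn; linarith) (by rw [← hS]; exact hS0) (by linarith)
    (by ring)
  have hp1 : 1 ≤ p := by linarith
  have near := fun t (ht : t ∈ Icc 0 T) => eq_of_near hn hp1 h₁.1 h₂.1 hc₁ hc₂ ht
  obtain ⟨G, hG⟩ : ∃ G : Set ℝ, G = {t | ∀ τ ∈ Icc 0 t, u₁ τ =ᵐ[volume] u₂ τ} := ⟨_, rfl⟩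
  have hcl : IsClosed (G ∩ Icc 0 T) := by
    apply isClosed_of_closure_subset
    intro x hx
    have hxI : x ∈ Icc 0 T := closure_minimal inter_subset_right isClosed_Icc hx
    refine ⟨?_, hxI⟩
    rw [Metric.mem_closure_iff] at hx
    rw [hG]
    intro τ hτ
    rcases hτ.2.lt_or_eq with h | h
    · obtain ⟨y, hy, hd⟩ := hx (x - τ) (by linarith)
      rw [Real.dist_eq] at hd
      have hyG := hy.1
      rw [hG] at hyG
      exact hyG τ ⟨hτ.1, by linarith [(abs_lt.mp hd).2]⟩
    · rw [h]
      refine near x hxI fun δ hδ => ?_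
      obtain ⟨y, hy, hd⟩ := hx δ hδ
      have hyG := hy.1
      rw [hG] at hyG
      exact ⟨y, hy.2, by rwa [Real.dist_eq, abs_sub_comm] at hd, hyG y ⟨hy.2.1, le_rfl⟩⟩
  have h0G : (0:ℝ) ∈ G := by
    rw [hG]
    intro τ hτ
    have : τ = 0 := le_antisymm hτ.2 hτ.1
    rw [this, hi₁, hi₂]
  have hall : Icc 0 T ⊆ G := by
    refine hcl.Icc_subset_of_forall_exists_gt h0G ?_
    rintro x ⟨hxG, hxI⟩ y hy
    rw [hG] at hxG
    obtain ⟨h, hh, hstep⟩ := local_step n hn hα hαp (by linarith) (by linarith) hC₁t hC₂t hC₁ hC₂ h₁ h₂ hc₁ hc₂ hm₁ hxI hxG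
    have hy' : x < y := hy
    refine ⟨min y (min (x + h) T), ?_, lt_min hy' (lt_min (by linarith) hxI.2), min_le_left _ _⟩
    rw [hG]
    intro τ hτ
    rcases le_or_gt τ x with hx | hx
    · exact hxG τ ⟨hτ.1, hx⟩
    · have hτ2 := hτ.2.trans (min_le_right _ _)
      exact hstep τ ⟨hx.le, hτ2.trans (min_le_left _ _)⟩ (hτ2.trans (min_le_right _ _))
  intro t ht
  have := hall ht
  rw [hG] at this
  exact this t ⟨ht.1, le_rfl⟩
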